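/- arXiv:2504.20739 — 2 statements merged into one kernel-verified Lean document; each statement's English description precedes it below -/
import Mathlib

section
/- Fix an integer d ≥ 5 and set β = d/2 − 2. There exists a constant c > 0 such that E[f₀(Qₙ)] / n^{1/(d−1)} tends to c as n → ∞, where Qₙ is the convex hull of n i.i.d. points with law μ_β and f₀(Qₙ) is its number of extreme points. -/
open MeasureTheory

/-- The `β`-distribution on the closed unit disk of `ℝ²`. -/
noncomputable def betaMeasure (β : ℝ) : Measure (EuclideanSpace ℝ (Fin 2)) :=
  volume.withDensity fun x =>
    ENNReal.ofReal (if ‖x‖ ≤ 1 then (β + 1) / Real.pi * (1 - ‖x‖ ^ 2) ^ β else 0)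

instance (β : ℝ) : SigmaFinite (betaMeasure β) :=
  SigmaFinite.withDensity_ofReal _

/-- The joint law of `n` i.i.d. points with law `μ_β`, realized on `(ℝ²)ⁿ`. -/
noncomputable def betaPi (β : ℝ) (n : ℕ) :
    Measure (Fin n → EuclideanSpace ℝ (Fin 2)) :=
  Measure.pi fun _ => betaMeasure β

/-- The number of vertices (extreme points) of the convex hull `Qₙ`, as a real. -/
noncomputable def vertCount {n : ℕ} (ω : Fin n → EuclideanSpace ℝ (Fin 2)) : ℝ :=
  Nat.card (Set.extremePoints ℝ (convexHull ℝ (Set.range ω)))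

/-- `E[f₀(Qₙ)]`. -/
noncomputable def meanF0 (β : ℝ) (n : ℕ) : ℝ :=
  ∫ ω, vertCount ω ∂ betaPi β n

namespace BetaHull

abbrev E2 := EuclideanSpace ℝ (Fin 2)

def D (u v : E2) : ℝ := u 0 * v 1 - u 1 * v 0

/-- general position -/
def GP {m : ℕ} (ω : Fin (m+2) → E2) : Prop :=
  ∀ (i : Fin (m+2)) (j : Fin (m+1)) (l : Fin m),
    D (ω (i.succAbove j) - ω i) (ω (i.succAbove (j.succAbove l)) - ω i) ≠ 0

def Ev {m : ℕ} (i : Fin (m+2)) (j : Fin (m+1)) : Set (Fin (m+2) → E2) :=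
  {ω | ∀ l : Fin m, 0 < D (ω (i.succAbove j) - ω i) (ω (i.succAbove (j.succAbove l)) - ω i)}

lemma func_eq (f : E2 →L[ℝ] ℝ) (v : E2) :
    f v = f (EuclideanSpace.single 0 1) * v 0 + f (EuclideanSpace.single 1 1) * v 1 := by
  have : v = v 0 • EuclideanSpace.single 0 (1:ℝ) + v 1 • EuclideanSpace.single 1 (1:ℝ) := by
    ext k; fin_cases k <;> simp
  conv_lhs => rw [this]
  simp [mul_comm]

lemma exists_j {m : ℕ} {ω : Fin (m+2) → E2} (h : GP ω) (i : Fin (m+2)) (f : E2 →L[ℝ] ℝ)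
    (hf : ∀ k : Fin (m+1), f (ω i) < f (ω (i.succAbove k))) : ∃ j, ω ∈ Ev i j := by
  set a := f (EuclideanSpace.single 0 1)
  set b := f (EuclideanSpace.single 1 1)
  let g : E2 → ℝ := fun v => a * v 1 - b * v 0
  let v : Fin (m+1) → E2 := fun k => ω (i.succAbove k) - ω i
  have hv : ∀ k, 0 < f (v k) := fun k => by simpa [v] using hf k
  obtain ⟨j, hj⟩ := Finite.exists_min (fun k => g (v k) / f (v k))
  refine ⟨j, fun l => ?_⟩
  have h1 := hj (j.succAbove l)
  have hD : D (v j) (v (j.succAbove l)) ≠ 0 := h i j l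
  change 0 < D (v j) (v (j.succAbove l))
  refine lt_of_le_of_ne ?_ hD.symm
  by_contra hneg
  push Not at hneg
  have h2 := hv j
  have h3 := hv (j.succAbove l)
  rw [div_le_div_iff₀ h2 h3] at h1
  generalize v j = p at *
  generalize v (j.succAbove l) = q at *
  have e1 := func_eq f p
  have e2 := func_eq f q
  have key : g q * f p - g p * f q = (a^2+b^2) * D p q := by
    rw [e1, e2]; simp only [g, D]; ring
  have hab : 0 < a^2+b^2 := by
    by_contra hh
    have ha : a = 0 := by nlinarith [sq_nonneg a, sq_nonneg b]
    have hb : b = 0 := by nlinarith [sq_nonneg a, sq_nonneg b]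
    have : f p = 0 := by rw [e1]; change a * _ + b * _ = 0; rw [ha, hb]; ring
    linarith
  have : (a^2+b^2) * D p q < 0 := mul_neg_of_pos_of_neg hab (lt_of_le_of_ne hneg.le hD)
  linarith

lemma exists_f {m : ℕ} {ω : Fin (m+2) → E2} (h : GP ω) (hm : 0 < m) (i : Fin (m+2))
    (j : Fin (m+1)) (hj : ω ∈ Ev i j) :
    ∃ f : E2 →L[ℝ] ℝ, ∀ k : Fin (m+1), f (ω i) < f (ω (i.succAbove k)) := by
  let w := ω (i.succAbove j) - ω i
  have hw : w ≠ 0 := by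
    intro h0
    have := h i j ⟨0, hm⟩
    apply this
    change D w _ = 0
    rw [h0]; simp [D]
  have hw2 : 0 < w 0 ^ 2 + w 1 ^ 2 := by
    by_contra hh
    apply hw
    ext k; fin_cases k
    · change w 0 = 0; nlinarith [sq_nonneg (w 0), sq_nonneg (w 1)]
    · change w 1 = 0; nlinarith [sq_nonneg (w 0), sq_nonneg (w 1)]
  have ev : ∀ᶠ ε in nhdsWithin (0:ℝ) (Set.Ioi 0), ∀ l : Fin m,
      0 < D w (ω (i.succAbove (j.succAbove l)) - ω i) + ε *
        (w 0 * (ω (i.succAbove (j.succAbove l)) - ω i) 0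
          + w 1 * (ω (i.succAbove (j.succAbove l)) - ω i) 1) := by
    rw [Filter.eventually_all]
    intro l
    apply Filter.Eventually.filter_mono nhdsWithin_le_nhds
    apply ContinuousAt.eventually_lt (f := fun _ => (0:ℝ)) (by fun_prop) (by fun_prop)
    simpa using hj l
  obtain ⟨ε, hε, hε0⟩ := (ev.and self_mem_nhdsWithin).exists
  have hε0 : 0 < ε := hε0
  let f : E2 →L[ℝ] ℝ := (ε * w 0 - w 1) • EuclideanSpace.proj 0 + (ε * w 1 + w 0) • EuclideanSpace.proj 1
  have hf : ∀ z, f z = w 0 * z 1 - w 1 * z 0 + ε * (w 0 * z 0 + w 1 * z 1) := by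
    intro z; simp [f]; ring
  refine ⟨f, fun k => ?_⟩
  rw [← sub_pos, ← map_sub]
  rcases Fin.eq_self_or_eq_succAbove j k with rfl | ⟨l, rfl⟩
  · change 0 < f w
    rw [hf]
    have : 0 < ε * (w 0 ^ 2 + w 1 ^ 2) := by positivity
    nlinarith
  · rw [hf]; exact hε l

lemma extreme_iff {m : ℕ} {ω : Fin (m+2) → E2} (i : Fin (m+2)) :
    ((∃ f : E2 →L[ℝ] ℝ, ∀ k : Fin (m+1), f (ω i) < f (ω (i.succAbove k))) →
     ω i ∈ Set.extremePoints ℝ (convexHull ℝ (Set.range ω))) := by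
  rintro ⟨f, hf⟩
  have hsub : convexHull ℝ (Set.range ω) ⊆ {z | z = ω i ∨ f (ω i) < f z} := by
    apply convexHull_min
    · rintro _ ⟨k, rfl⟩
      rcases Fin.eq_self_or_eq_succAbove i k with rfl | ⟨l, rfl⟩
      · left; rfl
      · right; exact hf l
    · intro x hx y hy a b ha hb hab
      simp only [Set.mem_ofPred_eq, map_add, map_smul, smul_eq_mul] at *
      have hx' : f (ω i) ≤ f x := by rcases hx with rfl | h <;> [rfl; exact h.le]
      have hy' : f (ω i) ≤ f y := by rcases hy with rfl | h <;> [rfl; exact h.le]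
      have hb' : b = 1 - a := by linarith
      rcases hx with rfl | hx
      · rcases hy with rfl | hy
        · left; rw [← add_smul, hab, one_smul]
        · rcases hb.eq_or_lt with h0 | h0
          · left; have : a = 1 := by linarith
            rw [← h0, this]; simp
          · right; subst hb'; nlinarith
      · rcases ha.eq_or_lt with h0 | h0
        · have : b = 1 := by linarith
          rw [← h0, this]; simpa using hy
        · right; subst hb'; nlinarith
  rw [mem_extremePoints]
  refine ⟨subset_convexHull _ _ (Set.mem_range_self i), fun x hx y hy hxy => ?_⟩
  obtain ⟨a, b, ha, hb, hab, he⟩ := hxy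
  have h1 := hsub hx
  have h2 := hsub hy
  have hfe : a * f x + b * f y = f (ω i) := by rw [← he]; simp
  have hb' : b = 1 - a := by linarith
  have hx' : f (ω i) ≤ f x := by rcases h1 with rfl | h <;> [rfl; exact h.le]
  have hy' : f (ω i) ≤ f y := by rcases h2 with rfl | h <;> [rfl; exact h.le]
  constructor
  · rcases h1 with h | h
    · exact h
    · exfalso; have : f (ω i) < f x := h; subst hb'; nlinarith
  · rcases h2 with h | h
    · exact h
    · exfalso; have : f (ω i) < f y := h; subst hb'; nlinarith

lemma extreme_imp {m : ℕ} {ω : Fin (m+2) → E2} (hinj : Function.Injective ω) (i : Fin (m+2))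
    (h : ω i ∈ Set.extremePoints ℝ (convexHull ℝ (Set.range ω))) :
    ∃ f : E2 →L[ℝ] ℝ, ∀ k : Fin (m+1), f (ω i) < f (ω (i.succAbove k)) := by
  rw [(convex_convexHull ℝ (Set.range ω)).mem_extremePoints_iff_convex_sdiff] at h
  have hs : convexHull ℝ (Set.range (fun k => ω (i.succAbove k))) ⊆
      convexHull ℝ (Set.range ω) \ {ω i} := by
    apply convexHull_min _ h.2
    rintro _ ⟨k, rfl⟩
    exact ⟨subset_convexHull _ _ (Set.mem_range_self _), fun hh => i.succAbove_ne k (hinj hh)⟩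
  have hni : ω i ∉ convexHull ℝ (Set.range (fun k => ω (i.succAbove k))) := fun hh => (hs hh).2 rfl
  obtain ⟨f, u, h1, h2⟩ := geometric_hahn_banach_point_closed (convex_convexHull ℝ _)
    ((Set.finite_range (fun k => ω (i.succAbove k))).isClosed_convexHull ℝ) hni
  exact ⟨f, fun k => h1.trans (h2 _ (subset_convexHull _ _ (Set.mem_range_self _)))⟩

lemma GP.inj {m : ℕ} {ω : Fin (m+2) → E2} (h : GP ω) (hm : 0 < m) : Function.Injective ω := by
  intro i k hik
  by_contra hne
  obtain ⟨j, rfl⟩ := Fin.exists_succAbove_eq (Ne.symm hne)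
  apply h i j ⟨0, hm⟩
  rw [← hik]; simp [D]

lemma ev_unique {m : ℕ} {ω : Fin (m+2) → E2} (i : Fin (m+2)) (j j' : Fin (m+1))
    (h : ω ∈ Ev i j) (h' : ω ∈ Ev i j') : j = j' := by
  by_contra hne
  obtain ⟨l, hl⟩ := Fin.exists_succAbove_eq (Ne.symm hne)
  obtain ⟨l', hl'⟩ := Fin.exists_succAbove_eq hne
  have h1 := h l
  have h2 := h' l'
  rw [hl] at h1
  rw [hl'] at h2
  simp only [D] at h1 h2
  linarith

lemma card_eq {m : ℕ} {ω : Fin (m+2) → E2} (h : GP ω) (hm : 0 < m) :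
    (Nat.card (Set.extremePoints ℝ (convexHull ℝ (Set.range ω))) : ℝ) =
      ∑ i : Fin (m+2), ∑ j : Fin (m+1), (Ev i j).indicator (fun _ => (1:ℝ)) ω := by
  classical
  have hinj := h.inj hm
  have h1 : Set.extremePoints ℝ (convexHull ℝ (Set.range ω)) =
      ω '' {i | ∃ j, ω ∈ Ev i j} := by
    ext x
    constructor
    · intro hx
      obtain ⟨i, rfl⟩ := extremePoints_convexHull_subset hx
      obtain ⟨f, hf⟩ := extreme_imp hinj i hx
      exact ⟨i, exists_j h i f hf, rfl⟩
    · rintro ⟨i, ⟨j, hj⟩, rfl⟩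
      exact extreme_iff i (exists_f h hm i j hj)
  rw [h1, Nat.card_coe_set_eq, Set.ncard_image_of_injective _ hinj, Set.ncard_eq_toFinset_card']
  rw [Set.toFinset_card, Fintype.card_subtype, Finset.card_filter]
  push_cast
  refine Finset.sum_congr rfl fun i _ => ?_
  by_cases hi : ∃ j, ω ∈ Ev i j
  · obtain ⟨j, hj⟩ := hi
    rw [Finset.sum_eq_single j]
    · rw [Set.indicator_of_mem hj]; exact if_pos ⟨j, hj⟩
    · intro j' _ hne
      exact Set.indicator_of_notMem (fun h' => hne (ev_unique i j' j h' hj)) _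
    · simp
  · rw [Finset.sum_eq_zero]
    · exact if_neg hi
    · intro j _
      exact Set.indicator_of_notMem (fun h' => hi ⟨j, h'⟩) _

lemma mp {m : ℕ} (μ : Measure E2) [SigmaFinite μ] (i : Fin (m+2)) (j : Fin (m+1)) :
    MeasurePreserving (fun ω : Fin (m+2) → E2 =>
      (ω i, (ω (i.succAbove j), fun l : Fin m => ω (i.succAbove (j.succAbove l)))))
      (Measure.pi fun _ => μ) (μ.prod (μ.prod (Measure.pi fun _ => μ))) :=
  ((MeasurePreserving.id μ).prod (measurePreserving_piFinSuccAbove (fun _ => μ) j)).comp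
    (measurePreserving_piFinSuccAbove (fun _ => μ) i)

lemma D_meas : Measurable fun p : E2 × E2 => D p.1 p.2 := by
  unfold D
  fun_prop

lemma Dc_meas {X : Type*} [MeasurableSpace X] {f g : X → E2} (hf : Measurable f) (hg : Measurable g) :
    Measurable fun x => D (f x) (g x) := D_meas.comp (hf.prodMk hg)

def TS (m : ℕ) : Set (E2 × E2 × (Fin m → E2)) := {p | ∀ l, 0 < D (p.2.1 - p.1) (p.2.2 l - p.1)}

lemma TS_meas (m : ℕ) : MeasurableSet (TS m) := by
  have : TS m = ⋂ l, {p | 0 < D (p.2.1 - p.1) (p.2.2 l - p.1)} := by ext; simp [TS]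
  rw [this]
  refine MeasurableSet.iInter fun l => measurableSet_lt measurable_const (Dc_meas ?_ ?_)
  · fun_prop
  · fun_prop

lemma Ev_meas {m : ℕ} (i : Fin (m+2)) (j : Fin (m+1)) : MeasurableSet (Ev (m := m) i j) := by
  have : Ev (m := m) i j = (fun ω : Fin (m+2) → E2 =>
      (ω i, (ω (i.succAbove j), fun l : Fin m => ω (i.succAbove (j.succAbove l))))) ⁻¹' TS m := rfl
  rw [this]
  apply (TS_meas m).preimage
  fun_prop

lemma measure_Ev {m : ℕ} (μ : Measure E2) [SigmaFinite μ] (i : Fin (m+2)) (j : Fin (m+1)) :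
    (Measure.pi fun _ => μ) (Ev (m := m) i j) =
      ∫⁻ x, ∫⁻ y, (μ {z | 0 < D (y - x) (z - x)}) ^ m ∂μ ∂μ := by
  have : Ev (m := m) i j = (fun ω : Fin (m+2) → E2 =>
      (ω i, (ω (i.succAbove j), fun l : Fin m => ω (i.succAbove (j.succAbove l))))) ⁻¹' TS m := rfl
  rw [this, (mp μ i j).measure_preimage (TS_meas m).nullMeasurableSet,
    Measure.prod_apply (TS_meas m)]
  refine lintegral_congr fun x => ?_
  rw [Measure.prod_apply ((TS_meas m).preimage (by fun_prop))]
  refine lintegral_congr fun y => ?_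
  have : (Prod.mk y ⁻¹' (Prod.mk x ⁻¹' TS m)) =
      Set.univ.pi (fun _ : Fin m => {z | 0 < D (y - x) (z - x)}) := by
    ext z; simp [TS, Set.mem_pi]
  rw [this, Measure.pi_pi]
  simp

lemma line_null (x v : E2) (hv : v ≠ 0) : volume {z : E2 | D v (z - x) = 0} = 0 := by
  let f : E2 →ₗ[ℝ] ℝ := v 0 • (EuclideanSpace.proj (𝕜 := ℝ) (1 : Fin 2)).toLinearMap
    - v 1 • (EuclideanSpace.proj (𝕜 := ℝ) (0 : Fin 2)).toLinearMap
  have hf : ∀ z, f z = D v z := by intro z; simp [f, D]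
  have h1 : {z : E2 | D v (z - x) = 0} = (fun z => z - x) ⁻¹' (LinearMap.ker f : Set E2) := by
    ext z; simp only [Set.mem_ofPred_eq, Set.mem_preimage, SetLike.mem_coe, LinearMap.mem_ker, hf]
  simp only [sub_eq_add_neg] at h1
  simp only [sub_eq_add_neg]
  rw [h1, measure_preimage_add_right]
  apply Measure.addHaar_submodule
  intro h
  apply hv
  have hh : ∀ z, D v z = 0 := fun z => by
    have : z ∈ LinearMap.ker f := by rw [h]; trivial
    rw [← hf]; exact this
  ext k; fin_cases k
  · have := hh (EuclideanSpace.single 1 1)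
    simpa [D] using this
  · have := hh (EuclideanSpace.single 0 1)
    simpa [D] using this

lemma ae_GP {m : ℕ} (μ : Measure E2) [SigmaFinite μ] (hμ : μ ≪ volume) :
    ∀ᵐ ω ∂(Measure.pi fun _ : Fin (m+2) => μ), GP ω := by
  unfold GP
  rw [ae_all_iff]; intro i
  rw [ae_all_iff]; intro j
  rw [ae_all_iff]; intro l
  have hS : MeasurableSet {p : E2 × E2 × (Fin m → E2) | D (p.2.1 - p.1) (p.2.2 l - p.1) = 0} :=
    measurableSet_eq_fun (Dc_meas (by fun_prop) (by fun_prop)) measurable_const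
  have h0 : (μ.prod (μ.prod (Measure.pi fun _ : Fin m => μ)))
      {p : E2 × E2 × (Fin m → E2) | D (p.2.1 - p.1) (p.2.2 l - p.1) = 0} = 0 := by
    rw [Measure.measure_prod_null hS]
    filter_upwards with x
    change (μ.prod (Measure.pi fun _ : Fin m => μ)) _ = 0
    rw [Measure.measure_prod_null (hS.preimage (by fun_prop))]
    have hx : μ {x} = 0 := hμ (by simp)
    filter_upwards [compl_mem_ae_iff.2 hx] with y hy
    have hy : y - x ≠ 0 := sub_ne_zero.2 hy
    exact (Measure.quasiMeasurePreserving_eval (fun _ : Fin m => μ) l).preimage_null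
      (hμ (line_null x (y - x) hy))
  have := (mp μ i j).measure_preimage hS.nullMeasurableSet
  rw [h0] at this
  rw [ae_iff]
  simp only [not_not, ne_eq]
  exact this

lemma integral_card {m : ℕ} (hm : 0 < m) (μ : Measure E2) [IsProbabilityMeasure μ] (hμ : μ ≪ volume) :
    ∫ ω, (Nat.card (Set.extremePoints ℝ (convexHull ℝ (Set.range ω))) : ℝ)
      ∂(Measure.pi fun _ : Fin (m+2) => μ) =
    ((m:ℝ) + 2) * ((m:ℝ) + 1) *
      (∫⁻ x, ∫⁻ y, (μ {z | 0 < D (y - x) (z - x)}) ^ m ∂μ ∂μ).toReal := by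
  rw [integral_congr_ae (g := fun ω => ∑ i : Fin (m+2), ∑ j : Fin (m+1), (Ev i j).indicator (fun _ => (1:ℝ)) ω)]
  · have hint : ∀ (i : Fin (m+2)) (j : Fin (m+1)), Integrable ((Ev i j).indicator (fun _ => (1:ℝ)))
        (Measure.pi fun _ : Fin (m+2) => μ) := fun i j =>
      (integrable_const 1).indicator (Ev_meas i j)
    rw [integral_finsetSum _ (fun i _ => integrable_finsetSum _ fun j _ => hint i j)]
    simp_rw [integral_finsetSum _ (fun j _ => hint _ j)]
    have : ∀ (i : Fin (m+2)) (j : Fin (m+1)), ∫ ω, (Ev i j).indicator (fun _ => (1:ℝ)) ω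
        ∂(Measure.pi fun _ : Fin (m+2) => μ) = (∫⁻ x, ∫⁻ y, (μ {z | 0 < D (y - x) (z - x)}) ^ m ∂μ ∂μ).toReal := by
      intro i j
      rw [integral_indicator_const _ (Ev_meas i j), Measure.real, measure_Ev]; simp
    simp_rw [this]
    simp; ring
  · filter_upwards [ae_GP μ hμ] with ω h
    exact card_eq h hm
end BetaHull

namespace BetaHull
open Set Filter Topology Real in
lemma asymp (α γ c₁ c₂ : ℝ) (hα : 0 ≤ α) (hγ : 0 < γ) (hc₂ : 0 < c₂)
    (R : ℝ → ℝ) (hRm : Measurable R) (h0 : ∀ t ∈ Ioo (0:ℝ) 2, 0 ≤ R t)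
    (h1 : ∀ t ∈ Ioo (0:ℝ) 2, R t ≤ exp (-c₂ * t ^ γ))
    (hlim : Tendsto (fun t => (1 - R t) / t ^ γ) (𝓝[>] 0) (𝓝 c₁)) :
    Tendsto (fun m : ℕ => (m:ℝ) ^ ((α + 1) / γ) *
      ∫ t in Ioo (0:ℝ) 2, (t * (2 - t)) ^ α * R t ^ m) atTop
      (𝓝 (∫ s in Ioi (0:ℝ), 2 ^ α * (s ^ α * exp (-c₁ * s ^ γ)))) := by
  let lam : ℕ → ℝ := fun m => (m:ℝ) ^ (-(1/γ))
  have lpos : ∀ m : ℕ, 1 ≤ m → 0 < lam m := fun m hm => by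
    have : (0:ℝ) < m := by exact_mod_cast hm
    exact rpow_pos_of_pos this _
  have lγ : ∀ m : ℕ, 1 ≤ m → (m:ℝ) * lam m ^ γ = 1 := fun m hm => by
    have : (0:ℝ) < m := by exact_mod_cast hm
    simp only [lam]
    rw [← rpow_mul this.le, show -(1/γ) * γ = -1 by field_simp, rpow_neg_one]
    field_simp
  have llim : Tendsto lam atTop (𝓝 0) :=
    (tendsto_rpow_neg_atTop (by positivity : 0 < 1/γ)).comp tendsto_natCast_atTop_atTop
  let F : ℕ → ℝ → ℝ := fun m s => if lam m * s < 2 then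
    s ^ α * (2 - lam m * s) ^ α * R (lam m * s) ^ m else 0
  have key : ∀ m : ℕ, 1 ≤ m → ∫ s in Ioi (0:ℝ), F m s = (m:ℝ) ^ ((α + 1) / γ) *
      ∫ t in Ioo (0:ℝ) 2, (t * (2 - t)) ^ α * R t ^ m := by
    intro m hm
    have hmp : (0:ℝ) < m := by exact_mod_cast hm
    have e1 : ∫ t in Ioo (0:ℝ) 2, (t * (2 - t)) ^ α * R t ^ m =
        ∫ t in Ioi (0:ℝ), (Iio (2:ℝ)).indicator (fun t => (t * (2 - t)) ^ α * R t ^ m) t := by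
      rw [setIntegral_indicator measurableSet_Iio]; rfl
    have e2 := integral_comp_mul_left_Ioi'
      ((Iio (2:ℝ)).indicator (fun t => (t * (2 - t)) ^ α * R t ^ m)) 0 (lpos m hm)
    rw [mul_zero] at e2
    rw [e1, ← e2, smul_eq_mul, ← mul_assoc]
    have e3 : (m:ℝ) ^ ((α + 1) / γ) * lam m = (lam m ^ α)⁻¹ := by
      simp only [lam]
      rw [← rpow_mul hmp.le, ← rpow_neg hmp.le, ← rpow_add hmp]
      congr 1; field_simp; ring
    rw [e3, ← integral_const_mul]
    refine setIntegral_congr_fun measurableSet_Ioi fun s hs => ?_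
    have hs : 0 < s := hs
    have hl := lpos m hm
    simp only [F, indicator, mem_Iio]
    split_ifs with h
    · rw [mul_assoc (lam m) s, mul_rpow hl.le (mul_nonneg hs.le (by linarith)),
        mul_rpow hs.le (by linarith)]
      have := (rpow_pos_of_pos hl α).ne'
      field_simp
    · simp
  have main : Tendsto (fun m => ∫ s in Ioi (0:ℝ), F m s) atTop
      (𝓝 (∫ s in Ioi (0:ℝ), 2 ^ α * (s ^ α * exp (-c₁ * s ^ γ)))) := by
    apply tendsto_integral_filter_of_dominated_convergence
      (fun s => 2 ^ α * (s ^ α * exp (-c₂ * s ^ γ)))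
    · filter_upwards with m
      apply Measurable.aestronglyMeasurable
      apply Measurable.ite
      · exact measurableSet_lt (by fun_prop) (by fun_prop)
      · fun_prop
      · fun_prop
    · filter_upwards [eventually_ge_atTop 1] with m hm
      rw [ae_restrict_iff' measurableSet_Ioi]
      filter_upwards with s hs
      have hs : 0 < s := hs
      have hl := lpos m hm
      simp only [F]
      split_ifs with h
      · have hmem : lam m * s ∈ Ioo (0:ℝ) 2 := ⟨by positivity, h⟩
        have hR0 := h0 _ hmem
        have hR1 := h1 _ hmem
        have h2 : 0 ≤ 2 - lam m * s := by linarith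
        rw [norm_of_nonneg (by positivity)]
        have a1 : (2 - lam m * s) ^ α ≤ 2 ^ α := rpow_le_rpow h2 (by nlinarith [hmem.1]) hα
        have a2 : R (lam m * s) ^ m ≤ exp (-c₂ * s ^ γ) := by
          calc R (lam m * s) ^ m ≤ exp (-c₂ * (lam m * s) ^ γ) ^ m := pow_le_pow_left₀ hR0 hR1 _
            _ = exp (-c₂ * s ^ γ) := by
              rw [← exp_nat_mul, mul_rpow hl.le hs.le]
              congr 1
              linear_combination (-c₂ * s ^ γ) * lγ m hm
        calc s ^ α * (2 - lam m * s) ^ α * R (lam m * s) ^ m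
            ≤ s ^ α * 2 ^ α * exp (-c₂ * s ^ γ) := by gcongr
          _ = _ := by ring
      · simp; positivity
    · exact (integrableOn_rpow_mul_exp_neg_mul_rpow (by linarith) hγ hc₂).const_mul _
    · rw [ae_restrict_iff' measurableSet_Ioi]
      filter_upwards with s hs
      have hs : 0 < s := hs
      have t0 : Tendsto (fun m => lam m * s) atTop (𝓝 0) := by simpa using llim.mul_const s
      have t1 : Tendsto (fun m => lam m * s) atTop (𝓝[>] 0) := by
        rw [tendsto_nhdsWithin_iff]
        refine ⟨t0, ?_⟩
        filter_upwards [eventually_ge_atTop 1] with m hm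
        exact mul_pos (lpos m hm) hs
      have t2 : Tendsto (fun m : ℕ => R (lam m * s) ^ m) atTop (𝓝 (exp (-c₁ * s ^ γ))) := by
        have := tendsto_one_add_pow_exp_of_tendsto (g := fun m => R (lam m * s) - 1)
          (t := -c₁ * s ^ γ) ?_
        · simpa using this
        · have := ((hlim.comp t1).mul_const (s ^ γ)).neg
          rw [← neg_mul] at this
          refine this.congr' ?_
          filter_upwards [eventually_ge_atTop 1] with m hm
          have hl := lpos m hm
          simp only [Function.comp]
          rw [mul_rpow hl.le hs.le]
          have hh := lγ m hm
          have p1 := rpow_pos_of_pos hl γ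
          have p2 := rpow_pos_of_pos hs γ
          have : lam m ^ γ = (m:ℝ)⁻¹ := by
            have : (m:ℝ) ≠ 0 := by rintro h; rw [h] at hh; simp at hh
            field_simp; linarith
          rw [this]
          have : (m:ℝ) ≠ 0 := by rintro h; rw [h] at hh; simp at hh
          field_simp; ring
      have t3 : Tendsto (fun m => (2 - lam m * s) ^ α) atTop (𝓝 (2 ^ α)) := by
        have : Tendsto (fun m => 2 - lam m * s) atTop (𝓝 2) := by simpa using t0.const_sub 2
        exact this.rpow_const (Or.inl (by norm_num))
      have t4 := (t3.const_mul (s ^ α)).mul t2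
      have e : 2 ^ α * (s ^ α * exp (-c₁ * s ^ γ)) = s ^ α * 2 ^ α * exp (-c₁ * s ^ γ) := by ring
      rw [e]
      refine t4.congr' ?_
      filter_upwards [t0.eventually_lt_const (by norm_num : (0:ℝ) < 2)] with m hm
      simp only [F]; rw [if_pos hm]
  refine main.congr' ?_
  filter_upwards [eventually_ge_atTop 1] with m hm
  exact key m hm

open Set Filter Topology Real in
/-- asymptotics of the partial integral -/
lemma q_asymp (k b : ℝ) (hk : 0 < k) (hb : 0 ≤ b) (q : ℝ → ℝ)
    (hq : ∀ t ∈ Ioo (0:ℝ) 2, q t = k * ∫ u in (0:ℝ)..t, (u * (2 - u)) ^ b) :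
    (∀ t ∈ Ioo (0:ℝ) 2, k / ((b+1) * 2 ^ (b+1)) * t ^ (b+1) ≤ q t) ∧
    Tendsto (fun t => q t / t ^ (b+1)) (𝓝[>] 0) (𝓝 (k * 2 ^ b / (b+1))) := by
  have hint : ∀ s t : ℝ, IntervalIntegrable (fun u => (u * (2 - u)) ^ b) volume s t := fun s t =>
    (Continuous.rpow_const (by fun_prop) (fun _ => Or.inr hb)).intervalIntegrable _ _
  have hint2 : ∀ (c s t : ℝ), IntervalIntegrable (fun u => c * u ^ b) volume s t := fun c s t =>
    (Continuous.mul continuous_const (Continuous.rpow_const (by fun_prop) (fun _ => Or.inr hb))).intervalIntegrable _ _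
  have hval : ∀ (c t : ℝ), 0 < t → ∫ u in (0:ℝ)..t, c * u ^ b = c * (t ^ (b+1) / (b+1)) := by
    intro c t ht
    rw [intervalIntegral.integral_const_mul, integral_rpow (Or.inl (by linarith)),
      zero_rpow (by linarith), sub_zero]
  have lower : ∀ t ∈ Ioo (0:ℝ) 2, k * ((2 - t) ^ b * (t ^ (b+1) / (b+1))) ≤ q t := by
    intro t ht
    rw [hq t ht, ← hval _ _ ht.1]
    gcongr
    apply intervalIntegral.integral_mono_on ht.1.le (hint2 _ _ _) (hint _ _)
    intro u hu
    rw [mul_rpow hu.1 (by linarith [hu.2, ht.2]), mul_comm]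
    gcongr
    · exact rpow_nonneg hu.1 _
    · linarith [ht.2]
    · exact hu.2
  have upper : ∀ t ∈ Ioo (0:ℝ) 2, q t ≤ k * (2 ^ b * (t ^ (b+1) / (b+1))) := by
    intro t ht
    rw [hq t ht, ← hval _ _ ht.1]
    gcongr
    apply intervalIntegral.integral_mono_on ht.1.le (hint _ _) (hint2 _ _ _)
    intro u hu
    rw [mul_rpow hu.1 (by linarith [hu.2, ht.2]), mul_comm]
    gcongr
    · exact rpow_nonneg hu.1 _
    · linarith [hu.2, ht.2]
    · linarith [hu.1]
  constructor
  · intro t ht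
    have h2p : (0:ℝ) < 2 ^ (b+1) := by positivity
    have hh : q (t/2) ≤ q t := by
      rw [hq t ht, hq (t/2) ⟨by linarith [ht.1], by linarith [ht.2, ht.1]⟩]
      gcongr
      apply intervalIntegral.integral_mono_interval le_rfl (by linarith [ht.1]) (by linarith [ht.1]) _ (hint _ _)
      rw [EventuallyLE, ae_restrict_iff' measurableSet_Ioc]
      filter_upwards with u hu
      exact rpow_nonneg (mul_nonneg hu.1.le (by linarith [hu.2, ht.2])) _
    refine le_trans ?_ hh
    refine le_trans ?_ (lower (t/2) ⟨by linarith [ht.1], by linarith [ht.2, ht.1]⟩)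
    rw [div_rpow ht.1.le (by norm_num)]
    have h1 : 1 ≤ (2 - t/2) ^ b := one_le_rpow (by linarith [ht.2]) hb
    have h3 : 0 < t ^ (b+1) := rpow_pos_of_pos ht.1 _
    calc k / ((b+1) * 2 ^ (b+1)) * t ^ (b+1) = k * (1 * (t ^ (b+1) / 2 ^ (b+1) / (b+1))) := by
          field_simp
      _ ≤ _ := by gcongr
  · have l1 : Tendsto (fun t : ℝ => k * (2 - t) ^ b / (b+1)) (𝓝[>] 0) (𝓝 (k * 2 ^ b / (b+1))) := by
      have : Continuous (fun t : ℝ => k * (2 - t) ^ b / (b+1)) := by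
        apply Continuous.div_const
        apply continuous_const.mul
        exact Continuous.rpow_const (by fun_prop) (fun _ => Or.inr hb)
      have := this.tendsto 0
      simp only [sub_zero] at this
      exact this.mono_left nhdsWithin_le_nhds
    have hev : ∀ᶠ t : ℝ in 𝓝[>] 0, t ∈ Ioo (0:ℝ) 2 := Ioo_mem_nhdsGT (by norm_num)
    refine tendsto_of_tendsto_of_tendsto_of_le_of_le' l1 tendsto_const_nhds ?_ ?_
    · filter_upwards [hev] with t ht
      have h3 : 0 < t ^ (b+1) := rpow_pos_of_pos ht.1 _
      rw [le_div_iff₀ h3]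
      refine le_trans (le_of_eq ?_) (lower t ht)
      field_simp
    · filter_upwards [hev] with t ht
      have h3 : 0 < t ^ (b+1) := rpow_pos_of_pos ht.1 _
      rw [div_le_iff₀ h3]
      refine le_trans (upper t ht) (le_of_eq ?_)
      field_simp
  try ring
end BetaHull

namespace BetaHull
open ENNReal

noncomputable def p (β : ℝ) (z : ℂ) : ℝ≥0∞ :=
  ENNReal.ofReal (if ‖z‖ ≤ 1 then (β + 1) / Real.pi * (1 - ‖z‖ ^ 2) ^ β else 0)

lemma p_meas (β : ℝ) : Measurable (p β) := by
  unfold p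
  refine ENNReal.measurable_ofReal.comp (Measurable.ite ?_ ?_ measurable_const)
  · exact measurableSet_le (by fun_prop) (by fun_prop)
  · fun_prop

lemma p_comp {X : Type*} [MeasurableSpace X] (β : ℝ) {f : X → ℂ} (hf : Measurable f) :
    Measurable fun x => p β (f x) := (p_meas β).comp hf

noncomputable def nu (β : ℝ) : Measure ℂ := volume.withDensity (p β)

instance (β : ℝ) : SigmaFinite (nu β) := SigmaFinite.withDensity_ofReal _

lemma p_mk (β a h : ℝ) : p β ⟨a, h⟩ =
    ENNReal.ofReal (if a ^ 2 + h ^ 2 ≤ 1 then (β + 1) / Real.pi * (1 - (a ^ 2 + h ^ 2)) ^ β else 0) := by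
  have h1 : ‖(⟨a, h⟩ : ℂ)‖ ^ 2 = a ^ 2 + h ^ 2 := by
    rw [Complex.sq_norm, Complex.normSq_mk]; ring
  unfold p
  rw [h1]
  congr 2
  rw [← h1, eq_iff_iff]
  constructor
  · intro h; exact pow_le_one₀ (norm_nonneg _) h
  · intro h; exact (sq_le_one_iff₀ (norm_nonneg _)).1 h

lemma p_out {β : ℝ} (hβ : 0 < β) (a h : ℝ) (hh : h ∉ Set.Ioo (-1:ℝ) 1) : p β ⟨a, h⟩ = 0 := by
  have h1 : 1 ≤ h ^ 2 := by
    by_contra hc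
    push Not at hc
    exact hh (abs_lt.1 ((sq_lt_one_iff_abs_lt_one h).1 hc))
  rw [p_mk]
  split_ifs with h2
  · have : 1 - (a ^ 2 + h ^ 2) = 0 := by nlinarith [sq_nonneg a]
    rw [this, Real.zero_rpow hβ.ne']; simp
  · simp

lemma p_scale {β : ℝ} (a h : ℝ) (hh : h ∈ Set.Ioo (-1:ℝ) 1) :
    p β ⟨Real.sqrt (1 - h ^ 2) * a, h⟩ = ENNReal.ofReal ((1 - h ^ 2) ^ β) * p β ⟨a, 0⟩ := by
  have h1 : 0 < 1 - h ^ 2 := by nlinarith [hh.1, hh.2]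
  have hs : Real.sqrt (1 - h ^ 2) ^ 2 = 1 - h ^ 2 := Real.sq_sqrt h1.le
  rw [p_mk, p_mk, ← ENNReal.ofReal_mul (Real.rpow_nonneg h1.le _), mul_pow, hs]
  congr 1
  have h3 : (1 - h ^ 2) * a ^ 2 + h ^ 2 ≤ 1 ↔ a ^ 2 + 0 ^ 2 ≤ 1 := by
    constructor
    · intro h; by_contra hc; push Not at hc; nlinarith
    · intro h; nlinarith
  by_cases h4 : a ^ 2 + 0 ^ 2 ≤ 1
  · rw [if_pos h4, if_pos (h3.2 h4)]
    rw [show 1 - ((1 - h ^ 2) * a ^ 2 + h ^ 2) = (1 - h ^ 2) * (1 - (a ^ 2 + 0 ^ 2)) by ring,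
      Real.mul_rpow h1.le (by linarith)]
    ring
  · rw [if_neg h4, if_neg (fun h => h4 (h3.1 h))]; simp

lemma lint_scale {s : ℝ} (hs : 0 < s) {f : ℝ → ℝ≥0∞} (hf : Measurable f) :
    ∫⁻ a, f a = ENNReal.ofReal s * ∫⁻ a, f (s * a) := by
  have h := Real.map_volume_mul_left hs.ne'
  have h2 : ∫⁻ a, f a ∂(Measure.map (fun x => s * x) volume) = ∫⁻ a, f (s * a) :=
    lintegral_map hf (by fun_prop)
  rw [← h2, h, lintegral_smul_measure, smul_eq_mul, ← mul_assoc, ← ENNReal.ofReal_mul hs.le,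
    abs_of_pos (by positivity), mul_inv_cancel₀ hs.ne']
  simp

lemma mk_meas : Measurable fun q : ℝ × ℝ => (⟨q.1, q.2⟩ : ℂ) :=
  Complex.measurableEquivRealProd.symm.measurable

lemma mkc_meas {X : Type*} [MeasurableSpace X] {f g : X → ℝ} (hf : Measurable f) (hg : Measurable g) :
    Measurable fun x => (⟨f x, g x⟩ : ℂ) := mk_meas.comp (hf.prodMk hg)

noncomputable def M (β h : ℝ) : ℝ≥0∞ := ∫⁻ a, p β ⟨a, h⟩

noncomputable def V (β a h : ℝ) : ℝ≥0∞ := ∫⁻ r, ENNReal.ofReal r * p β ⟨a + r, h⟩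

noncomputable def W (β h : ℝ) : ℝ≥0∞ := ∫⁻ a, p β ⟨a, h⟩ * V β a h

lemma V_meas (β : ℝ) : Measurable fun q : ℝ × ℝ => V β q.1 q.2 := by
  unfold V
  apply Measurable.lintegral_prod_right'
    (f := fun q : (ℝ × ℝ) × ℝ => ENNReal.ofReal q.2 * p β ⟨q.1.1 + q.2, q.1.2⟩)
  exact (by fun_prop : Measurable fun q : (ℝ × ℝ) × ℝ => ENNReal.ofReal q.2).mul
    (p_comp β (mkc_meas (by fun_prop) (by fun_prop)))

lemma V_meas' (β h : ℝ) : Measurable fun a : ℝ => V β a h := by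
  unfold V
  apply Measurable.lintegral_prod_right'
    (f := fun q : ℝ × ℝ => ENNReal.ofReal q.2 * p β ⟨q.1 + q.2, h⟩)
  exact (by fun_prop : Measurable fun q : ℝ × ℝ => ENNReal.ofReal q.2).mul
    (p_comp β (mkc_meas (by fun_prop) (by fun_prop)))

lemma M_out {β : ℝ} (hβ : 0 < β) (h : ℝ) (hh : h ∉ Set.Ioo (-1:ℝ) 1) : M β h = 0 := by
  simp [M, p_out hβ _ h hh]

lemma W_out {β : ℝ} (hβ : 0 < β) (h : ℝ) (hh : h ∉ Set.Ioo (-1:ℝ) 1) : W β h = 0 := by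
  simp [W, p_out hβ _ h hh]

lemma M_scale {β : ℝ} (h : ℝ) (hh : h ∈ Set.Ioo (-1:ℝ) 1) :
    M β h = ENNReal.ofReal ((1 - h ^ 2) ^ (β + 1/2)) * M β 0 := by
  have h1 : 0 < 1 - h ^ 2 := by nlinarith [hh.1, hh.2]
  have hs := Real.sqrt_pos.2 h1
  unfold M
  rw [lint_scale hs (p_comp β (mkc_meas (by fun_prop) (by fun_prop)))]
  simp_rw [p_scale _ h hh]
  rw [lintegral_const_mul _ (p_comp β (mkc_meas (by fun_prop) (by fun_prop))), ← mul_assoc,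
    ← ENNReal.ofReal_mul hs.le, Real.sqrt_eq_rpow, ← Real.rpow_add h1, add_comm]

lemma V_scale {β : ℝ} (a h : ℝ) (hh : h ∈ Set.Ioo (-1:ℝ) 1) :
    V β (Real.sqrt (1 - h ^ 2) * a) h = ENNReal.ofReal ((1 - h ^ 2) ^ (β + 1)) * V β a 0 := by
  have h1 : 0 < 1 - h ^ 2 := by nlinarith [hh.1, hh.2]
  have hs := Real.sqrt_pos.2 h1
  unfold V
  have m0 : ∀ x h : ℝ, Measurable fun r : ℝ => ENNReal.ofReal r * p β ⟨x + r, h⟩ := fun x h =>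
    (by fun_prop : Measurable fun r : ℝ => ENNReal.ofReal r).mul (p_comp β (mkc_meas (by fun_prop) (by fun_prop)))
  rw [lint_scale hs (m0 _ h)]
  have : ∀ r, ENNReal.ofReal (Real.sqrt (1 - h ^ 2) * r) *
      p β ⟨Real.sqrt (1 - h ^ 2) * a + Real.sqrt (1 - h ^ 2) * r, h⟩ =
      ENNReal.ofReal (Real.sqrt (1 - h^2) * (1 - h ^ 2) ^ β) * (ENNReal.ofReal r * p β ⟨a + r, 0⟩) := by
    intro r
    rw [← mul_add, p_scale _ h hh, ENNReal.ofReal_mul hs.le, ENNReal.ofReal_mul hs.le]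
    ring
  simp_rw [this]
  rw [lintegral_const_mul _ (m0 a 0), ← mul_assoc,
    ← ENNReal.ofReal_mul hs.le, ← mul_assoc, Real.mul_self_sqrt h1.le, Real.rpow_add h1, Real.rpow_one,
    mul_comm (1 - h^2)]

lemma W_scale {β : ℝ} (h : ℝ) (hh : h ∈ Set.Ioo (-1:ℝ) 1) :
    W β h = ENNReal.ofReal ((1 - h ^ 2) ^ (2 * β + 3/2)) * W β 0 := by
  have h1 : 0 < 1 - h ^ 2 := by nlinarith [hh.1, hh.2]
  have hs := Real.sqrt_pos.2 h1
  have m0 : ∀ h : ℝ, Measurable fun a : ℝ => p β ⟨a, h⟩ * V β a h := fun h => by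
    have v1 := V_meas' β h
    have v2 : Measurable fun a : ℝ => p β ⟨a, h⟩ :=
      p_comp β (mkc_meas measurable_id measurable_const)
    exact v2.mul v1
  unfold W
  rw [lint_scale hs (m0 h)]
  have : ∀ a, p β ⟨Real.sqrt (1 - h ^ 2) * a, h⟩ * V β (Real.sqrt (1 - h ^ 2) * a) h =
      ENNReal.ofReal ((1 - h ^ 2) ^ β * (1 - h ^ 2) ^ (β + 1)) * (p β ⟨a, 0⟩ * V β a 0) := by
    intro a
    rw [p_scale _ h hh, V_scale _ h hh, ENNReal.ofReal_mul (by positivity)]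
    ring
  simp_rw [this]
  rw [lintegral_const_mul _ (m0 0), ← mul_assoc, ← ENNReal.ofReal_mul hs.le, Real.sqrt_eq_rpow,
    ← Real.rpow_add h1, ← Real.rpow_add h1,
    show 1/2 + (β + (β + 1)) = 2 * β + 3/2 by ring]

/-- Fubini on `ℂ`. -/
lemma lint_complex {f : ℂ → ℝ≥0∞} (hf : Measurable f) :
    ∫⁻ w, f w = ∫⁻ h : ℝ, ∫⁻ a : ℝ, f ⟨a, h⟩ := by
  have := Complex.volume_preserving_equiv_real_prod.symm.lintegral_comp hf
  rw [← this, Measure.volume_eq_prod, lintegral_prod_symm]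
  · rfl
  · exact (hf.comp Complex.measurableEquivRealProd.symm.measurable).aemeasurable

lemma lint_nu (β : ℝ) {f : ℂ → ℝ≥0∞} (hf : Measurable f) : ∫⁻ w, f w ∂(nu β) = ∫⁻ w, p β w * f w := by
  unfold nu
  rw [lintegral_withDensity_eq_lintegral_mul _ (p_meas β) hf]; rfl

/-- marginal -/
lemma lint_im {β : ℝ} (hβ : 0 < β) {f : ℝ → ℝ≥0∞} (hf : Measurable f) :
    ∫⁻ w : ℂ, f w.im ∂(nu β) =
      M β 0 * ∫⁻ t in Set.Ioo (-1:ℝ) 1, ENNReal.ofReal ((1 - t ^ 2) ^ (β + 1/2)) * f t := by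
  have hfm : Measurable fun w : ℂ => f w.im := hf.comp Complex.measurable_im
  rw [lint_nu β hfm, lint_complex (f := fun w => p β w * f w.im) ((p_meas β).mul hfm)]
  have : ∀ h : ℝ, ∫⁻ a : ℝ, p β ⟨a, h⟩ * f h =
      (Set.Ioo (-1:ℝ) 1).indicator (fun t => M β 0 * (ENNReal.ofReal ((1 - t ^ 2) ^ (β + 1/2)) * f t)) h := by
    intro h
    rw [lintegral_mul_const _ (p_comp β (mkc_meas (by fun_prop) (by fun_prop)))]
    by_cases hh : h ∈ Set.Ioo (-1:ℝ) 1
    · rw [Set.indicator_of_mem hh]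
      change M β h * f h = _
      rw [M_scale h hh]; ring
    · rw [Set.indicator_of_notMem hh]
      change M β h * f h = _
      rw [M_out hβ h hh, zero_mul]
  simp_rw [this]
  rw [lintegral_indicator measurableSet_Ioo, lintegral_const_mul]
  exact (by fun_prop : Measurable fun t : ℝ => ENNReal.ofReal ((1 - t ^ 2) ^ (β + 1/2))).mul hf

lemma mp_withDensity {X Y : Type*} [MeasurableSpace X] [MeasurableSpace Y] {μ : Measure X}
    {ν : Measure Y} {g : X → Y} (hg : MeasurePreserving g μ ν) {q : Y → ℝ≥0∞} (hq : Measurable q) :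
    MeasurePreserving g (μ.withDensity (fun x => q (g x))) (ν.withDensity q) := by
  refine ⟨hg.measurable, ?_⟩
  ext s hs
  rw [Measure.map_apply hg.measurable hs, withDensity_apply _ hs,
    withDensity_apply _ (hg.measurable hs), hg.setLIntegral_comp_preimage hs hq]

lemma nu_rot (β : ℝ) (a : Circle) : MeasurePreserving (fun z : ℂ => (a:ℂ) * z) (nu β) (nu β) := by
  have h := mp_withDensity ((rotation a).measurePreserving) (p_meas β)
  have : (fun x => p β (rotation a x)) = p β := by
    ext x; simp only [p, LinearIsometryEquiv.norm_map]
  rw [this] at h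
  exact h

lemma vol_rot (a : Circle) : MeasurePreserving (fun z : ℂ => (a:ℂ) * z) volume volume :=
  (rotation a).measurePreserving

lemma p_rot (β : ℝ) (a : Circle) (z : ℂ) : p β (a * z) = p β z := by
  simp only [p, norm_mul, Circle.norm_coe, one_mul]

noncomputable def Q (β h : ℝ) : ℝ≥0∞ := nu β {w : ℂ | h < w.im}

lemma Q_anti (β : ℝ) : Antitone (Q β) := fun _ _ hst => measure_mono fun _ hw => lt_of_le_of_lt hst hw

lemma Q_meas (β : ℝ) : Measurable (Q β) := (Q_anti β).measurable

open ComplexConjugate in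
lemma half (β : ℝ) (a : Circle) (r : ℝ) (hr : 0 < r) (x : ℂ) :
    nu β {z : ℂ | 0 < (conj ((r:ℂ) * a) * (z - x)).im} = Q β (conj (a:ℂ) * x).im := by
  have h1 : {z : ℂ | 0 < (conj ((r:ℂ) * a) * (z - x)).im} =
      (fun z : ℂ => ((a⁻¹ : Circle) : ℂ) * z) ⁻¹' {w | (conj (a:ℂ) * x).im < w.im} := by
    ext z
    simp only [Set.mem_ofPred_eq, Set.mem_preimage, Circle.coe_inv_eq_conj]
    rw [map_mul, Complex.conj_ofReal, mul_assoc, Complex.im_ofReal_mul, mul_sub, Complex.sub_im]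
    rw [mul_pos_iff_of_pos_left hr, sub_pos]
  rw [h1, (nu_rot β a⁻¹).measure_preimage]
  · rfl
  · exact (measurableSet_lt measurable_const Complex.measurable_im).nullMeasurableSet

lemma lint_radial {B : ℝ → ℝ≥0∞} (hB : Measurable B) :
    ∫⁻ q in polarCoord.target, B q.1 = ENNReal.ofReal (2 * Real.pi) * ∫⁻ r in Set.Ioi (0:ℝ), B r := by
  rw [polarCoord_target, Measure.volume_eq_prod, ← Measure.prod_restrict,
    lintegral_prod (fun q : ℝ × ℝ => B q.1) (hB.comp measurable_fst).aemeasurable]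
  simp only [lintegral_const, MeasurableSet.univ, Measure.restrict_apply, Set.univ_inter,
    Real.volume_Ioo]
  rw [lintegral_mul_const _ hB, mul_comm]
  congr 2; ring

noncomputable def cc (φ : ℝ) : ℂ := (Circle.exp φ : ℂ)

lemma cc_meas : Measurable cc := by
  unfold cc
  have : Continuous fun φ : ℝ => (Circle.exp φ : ℂ) := by fun_prop
  exact this.measurable

lemma polar_symm (q : ℝ × ℝ) : Complex.polarCoord.symm q = (q.1 : ℂ) * cc q.2 := by
  rw [Complex.polarCoord_symm_apply, cc, Circle.coe_exp, Complex.exp_mul_I]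
  simp

lemma nu_univ {β : ℝ} (hβ : 0 < β) : nu β Set.univ = 1 := by
  have h1 : nu β Set.univ = ∫⁻ z, p β z := by
    unfold nu; rw [withDensity_apply _ MeasurableSet.univ]; simp
  have hm : Measurable fun r : ℝ => ENNReal.ofReal r * ENNReal.ofReal (if r ≤ 1 then (β + 1) / Real.pi * (1 - r ^ 2) ^ β else 0) := by
    refine Measurable.mul (by fun_prop) (ENNReal.measurable_ofReal.comp (Measurable.ite ?_ ?_ measurable_const))
    · exact measurableSet_le (by fun_prop) (by fun_prop)
    · fun_prop
  have h2 : ∫⁻ z, p β z = ∫⁻ q in polarCoord.target, (fun r : ℝ => ENNReal.ofReal r *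
      ENNReal.ofReal (if r ≤ 1 then (β + 1) / Real.pi * (1 - r ^ 2) ^ β else 0)) q.1 := by
    rw [← Complex.lintegral_comp_polarCoord_symm]
    refine setLIntegral_congr_fun polarCoord.open_target.measurableSet fun q hq => ?_
    have hq1 : 0 < q.1 := by rw [polarCoord_target] at hq; exact hq.1
    have : ‖Complex.polarCoord.symm q‖ = q.1 := by
      rw [polar_symm, cc]; simp [hq1.le]
    simp only [p, this, smul_eq_mul]
  rw [h1, h2, lint_radial hm]
  have h3 : ∫⁻ r in Set.Ioi (0:ℝ), ENNReal.ofReal r *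
      ENNReal.ofReal (if r ≤ 1 then (β + 1) / Real.pi * (1 - r ^ 2) ^ β else 0) =
      ∫⁻ r in Set.Ioc (0:ℝ) 1, ENNReal.ofReal (r * ((β + 1) / Real.pi * (1 - r ^ 2) ^ β)) := by
    rw [← Set.Ioi_inter_Iic, Set.inter_comm, ← setLIntegral_indicator measurableSet_Iic]
    refine setLIntegral_congr_fun measurableSet_Ioi fun r hr => ?_
    have hr : 0 < r := hr
    simp only [Set.indicator, Set.mem_Iic]
    split_ifs with h
    · rw [ENNReal.ofReal_mul hr.le]
    · simp
  have hcont : Continuous fun r : ℝ => r * ((β + 1) / Real.pi * (1 - r ^ 2) ^ β) := by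
    refine continuous_id.mul (continuous_const.mul (Continuous.rpow_const (by fun_prop) fun _ => Or.inr hβ.le))
  have hI : ∫ r in (0:ℝ)..1, r * ((β + 1) / Real.pi * (1 - r ^ 2) ^ β) = 1 / (2 * Real.pi) := by
    rw [intervalIntegral.integral_eq_sub_of_hasDerivAt
      (f := fun r => -(1 / (2 * Real.pi)) * (1 - r ^ 2) ^ (β + 1))]
    · simp [Real.zero_rpow (by linarith : β + 1 ≠ 0)]
    · intro r _
      have := (((hasDerivAt_pow 2 r).const_sub 1).rpow_const (p := β + 1) (Or.inr (by linarith))).const_mul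
        (-(1 / (2 * Real.pi)))
      refine this.congr_deriv ?_
      field_simp
      rw [show β + 1 - 1 = β by ring]
      push_cast
      ring
    · exact hcont.intervalIntegrable _ _
  rw [h3, ← ofReal_integral_eq_lintegral_ofReal]
  · rw [← intervalIntegral.integral_of_le (by norm_num), hI, ← ENNReal.ofReal_mul (by positivity)]
    have := Real.pi_pos
    rw [mul_one_div_cancel (by positivity)]; simp
  · exact (hcont.integrableOn_Icc).mono_set Set.Ioc_subset_Icc_self
  · rw [Filter.EventuallyLE, ae_restrict_iff' measurableSet_Ioc]
    filter_upwards with r hr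
    have : 0 ≤ 1 - r ^ 2 := by nlinarith [hr.1, hr.2]
    have := hr.1
    have : 0 < Real.pi := Real.pi_pos
    positivity

lemma nu_prob {β : ℝ} (hβ : 0 < β) : IsProbabilityMeasure (nu β) := ⟨nu_univ hβ⟩

open ComplexConjugate in
noncomputable def T (β : ℝ) (m : ℕ) (x v : ℂ) : ℝ≥0∞ := (nu β {z : ℂ | 0 < (conj v * (z - x)).im}) ^ m

open ComplexConjugate in
lemma T_meas (β : ℝ) (m : ℕ) : Measurable fun q : ℂ × ℂ => T β m q.1 q.2 := by
  unfold T
  apply Measurable.pow_const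
  have hS : MeasurableSet {q : (ℂ × ℂ) × ℂ | 0 < (conj q.1.2 * (q.2 - q.1.1)).im} := by
    apply IsOpen.measurableSet
    exact isOpen_lt continuous_const (by fun_prop)
  have h2 : Measurable fun q : ℂ × ℂ => nu β (Prod.mk q ⁻¹' {q : (ℂ × ℂ) × ℂ | 0 < (conj q.1.2 * (q.2 - q.1.1)).im}) :=
    measurable_measure_prodMk_left (ν := nu β) hS
  convert h2 using 1
  funext q
  congr 1

lemma T_compm (β : ℝ) (m : ℕ) {X : Type*} [MeasurableSpace X] {f g : X → ℂ} (hf : Measurable f)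
    (hg : Measurable g) : Measurable fun x => T β m (f x) (g x) :=
  Measurable.comp (g := fun q : ℂ × ℂ => T β m q.1 q.2) (f := fun x => (f x, g x)) (T_meas β m) (hf.prodMk hg)

lemma T_polar (β : ℝ) (m : ℕ) (x : ℂ) (r φ : ℝ) (hr : 0 < r) :
    T β m x ((r:ℂ) * cc φ) = Q β ((starRingEnd ℂ) (cc φ) * x).im ^ m := by
  unfold T cc
  rw [half β _ r hr x]

lemma step1 (β : ℝ) (m : ℕ) : ∫⁻ x, ∫⁻ y, T β m x (y - x) ∂(nu β) ∂(nu β) =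
    ∫⁻ x, ∫⁻ v, p β x * (p β (x + v) * T β m x v) := by
  have m1 : Measurable fun q : ℂ × ℂ => T β m q.1 (q.2 - q.1) :=
    T_compm β m (by fun_prop) (by fun_prop)
  have m2 : Measurable fun x => ∫⁻ y, T β m x (y - x) ∂(nu β) := m1.lintegral_prod_right'
  rw [lint_nu β m2]
  refine lintegral_congr fun x => ?_
  have m3 : Measurable fun v => p β (x + v) * T β m x v :=
    (p_comp β (by fun_prop)).mul (T_compm β m (by fun_prop) (by fun_prop))
  rw [lintegral_const_mul _ m3]
  have m4 : Measurable fun y => T β m x (y - x) := T_compm β m (by fun_prop) (by fun_prop)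
  rw [lint_nu β m4, ← lintegral_add_left_eq_self _ x]
  simp

lemma step2 (β : ℝ) (m : ℕ) : ∫⁻ x, ∫⁻ v, p β x * (p β (x + v) * T β m x v) =
    ∫⁻ x, ∫⁻ q in polarCoord.target, ENNReal.ofReal q.1 * (p β x *
      (p β (x + q.1 * cc q.2) * Q β ((starRingEnd ℂ) (cc q.2) * x).im ^ m)) := by
  refine lintegral_congr fun x => ?_
  rw [← Complex.lintegral_comp_polarCoord_symm]
  refine setLIntegral_congr_fun polarCoord.open_target.measurableSet fun q hq => ?_
  have hq1 : 0 < q.1 := by rw [polarCoord_target] at hq; exact hq.1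
  simp only [polar_symm, smul_eq_mul]
  rw [T_polar β m x _ _ hq1]

lemma step3 (β : ℝ) (m : ℕ) : ∫⁻ x, ∫⁻ q in polarCoord.target, ENNReal.ofReal q.1 * (p β x *
      (p β (x + q.1 * cc q.2) * Q β ((starRingEnd ℂ) (cc q.2) * x).im ^ m)) =
    ∫⁻ q in polarCoord.target, (fun r : ℝ => ∫⁻ w, ENNReal.ofReal r * (p β w *
      (p β (w + r) * Q β w.im ^ m))) q.1 := by
  have ccm := cc_meas
  have ccm2 : Measurable fun u : ℂ × ℝ × ℝ => cc u.2.2 := ccm.comp (by fun_prop)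
  have cjm : Measurable (starRingEnd ℂ) := Complex.continuous_conj.measurable
  rw [lintegral_lintegral_swap]
  · refine lintegral_congr fun q => ?_
    have hm : Measurable fun x => ENNReal.ofReal q.1 * (p β x *
      (p β (x + q.1 * cc q.2) * Q β ((starRingEnd ℂ) (cc q.2) * x).im ^ m)) := by
      refine measurable_const.mul ((p_meas β).mul ((p_comp β (by fun_prop)).mul ?_))
      refine ((Q_meas β).comp (Complex.measurable_im.comp ?_)).pow_const m
      fun_prop
    rw [← (vol_rot (Circle.exp q.2)).lintegral_comp hm]
    refine lintegral_congr fun w => ?_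
    have e1 : (Circle.exp q.2 : ℂ) * w + q.1 * cc q.2 = (Circle.exp q.2 : ℂ) * (w + q.1) := by
      unfold cc; ring
    have e2 : (starRingEnd ℂ) (cc q.2) * ((Circle.exp q.2 : ℂ) * w) = w := by
      unfold cc
      rw [← mul_assoc, ← Circle.coe_inv_eq_conj, ← Circle.coe_mul]; simp
    rw [e1, e2, p_rot, p_rot]
  · apply Measurable.aemeasurable
    change Measurable fun u : ℂ × ℝ × ℝ => ENNReal.ofReal u.2.1 * (p β u.1 *
      (p β (u.1 + u.2.1 * cc u.2.2) * Q β ((starRingEnd ℂ) (cc u.2.2) * u.1).im ^ m))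
    refine Measurable.mul (by fun_prop) ((p_comp β (by fun_prop)).mul ((p_comp β (by fun_prop)).mul ?_))
    refine ((Q_meas β).comp (Complex.measurable_im.comp ?_)).pow_const m
    exact (cjm.comp ccm2).mul measurable_fst

lemma step4 (β : ℝ) (m : ℕ) : ∫⁻ r in Set.Ioi (0:ℝ), ∫⁻ w, ENNReal.ofReal r * (p β w *
      (p β (w + r) * Q β w.im ^ m)) = ∫⁻ h, Q β h ^ m * W β h := by
  have hm : Measurable fun u : ℝ × ℂ => ENNReal.ofReal u.1 * (p β u.2 *
      (p β (u.2 + u.1) * Q β u.2.im ^ m)) := by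
    refine Measurable.mul (by fun_prop) ((p_comp β (by fun_prop)).mul ((p_comp β (by fun_prop)).mul ?_))
    exact ((Q_meas β).comp (Complex.measurable_im.comp measurable_snd)).pow_const m
  have e0 : ∫⁻ r in Set.Ioi (0:ℝ), ∫⁻ w, ENNReal.ofReal r * (p β w *
      (p β (w + r) * Q β w.im ^ m)) = ∫⁻ r : ℝ, ∫⁻ w, ENNReal.ofReal r * (p β w *
      (p β (w + r) * Q β w.im ^ m)) := by
    rw [← lintegral_indicator measurableSet_Ioi]
    refine lintegral_congr fun r => ?_
    by_cases hr : r ∈ Set.Ioi (0:ℝ)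
    · rw [Set.indicator_of_mem hr]
    · rw [Set.indicator_of_notMem hr, ENNReal.ofReal_of_nonpos (not_lt.1 hr)]; simp
  rw [e0, lintegral_lintegral_swap (by exact hm.aemeasurable)]
  have hm2 : Measurable fun w : ℂ => ∫⁻ r : ℝ, ENNReal.ofReal r * (p β w *
      (p β (w + r) * Q β w.im ^ m)) := hm.lintegral_prod_left'
  rw [lint_complex hm2]
  refine lintegral_congr fun h => ?_
  have v1 := V_meas' β h
  have v2 : Measurable fun a : ℝ => p β ⟨a, h⟩ := p_comp β (mkc_meas (by fun_prop) (by fun_prop))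
  unfold W
  rw [← lintegral_const_mul _ (by exact v2.mul v1)]
  refine lintegral_congr fun a => ?_
  have v3 : Measurable fun r : ℝ => ENNReal.ofReal r * p β ⟨a + r, h⟩ :=
    Measurable.mul (by fun_prop) (p_comp β (mkc_meas (by fun_prop) (by fun_prop)))
  unfold V
  rw [← mul_assoc, ← lintegral_const_mul _ v3]
  refine lintegral_congr fun r => ?_
  have : (⟨a, h⟩ : ℂ) + (r:ℂ) = ⟨a + r, h⟩ := by apply Complex.ext <;> simp
  rw [this]
  ring

lemma IC_eq {β : ℝ} (hβ : 0 < β) (m : ℕ) : ∫⁻ x, ∫⁻ y, T β m x (y - x) ∂(nu β) ∂(nu β) =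
    (ENNReal.ofReal (2 * Real.pi) * W β 0) *
      ∫⁻ h in Set.Ioo (-1:ℝ) 1, ENNReal.ofReal ((1 - h ^ 2) ^ (2 * β + 3/2)) * Q β h ^ m := by
  have hB : Measurable fun r : ℝ => ∫⁻ w, ENNReal.ofReal r * (p β w *
      (p β (w + r) * Q β w.im ^ m)) := by
    have hm : Measurable fun u : ℝ × ℂ => ENNReal.ofReal u.1 * (p β u.2 *
        (p β (u.2 + u.1) * Q β u.2.im ^ m)) := by
        refine Measurable.mul (by fun_prop) ((p_comp β (by fun_prop)).mul ((p_comp β (by fun_prop)).mul ?_))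
        exact ((Q_meas β).comp (Complex.measurable_im.comp measurable_snd)).pow_const m
    exact hm.lintegral_prod_right'
  rw [step1, step2, step3, lint_radial hB, step4, mul_assoc]
  · congr 1
    have : ∀ h, Q β h ^ m * W β h = (Set.Ioo (-1:ℝ) 1).indicator (fun h => W β 0 *
      (ENNReal.ofReal ((1 - h ^ 2) ^ (2 * β + 3/2)) * Q β h ^ m)) h := by
      intro h
      by_cases hh : h ∈ Set.Ioo (-1:ℝ) 1
      · rw [Set.indicator_of_mem hh, W_scale h hh]; ring
      · rw [Set.indicator_of_notMem hh, W_out hβ h hh, mul_zero]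
    simp_rw [this]
    rw [lintegral_indicator measurableSet_Ioo, lintegral_const_mul]
    exact Measurable.mul (by fun_prop) ((Q_meas β).pow_const m)

lemma R_nn (β t : ℝ) : 0 ≤ (Q β (t - 1)).toReal := ENNReal.toReal_nonneg

lemma R_meas (β : ℝ) : Measurable fun t => (Q β (t - 1)).toReal :=
  ((Q_meas β).comp (by fun_prop)).ennreal_toReal

lemma const_of_mul_eq_one {a b : ℝ≥0∞} (h : a * b = 1) : a ≠ 0 ∧ a ≠ ⊤ := by
  constructor
  · rintro rfl; simp at h
  · rintro rfl
    rcases eq_or_ne b 0 with rfl | hb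
    · simp at h
    · rw [ENNReal.top_mul hb] at h; simp at h

lemma M_const {β : ℝ} (hβ : 0 < β) : 0 < (M β 0).toReal := by
  have h := lint_im hβ (f := fun _ => 1) measurable_const
  rw [lintegral_const, nu_univ hβ, one_mul] at h
  obtain ⟨h1, h2⟩ := const_of_mul_eq_one h.symm
  exact ENNReal.toReal_pos h1 h2

lemma one_sub_R {β : ℝ} (hβ : 0 < β) (t : ℝ) (ht : t ∈ Set.Ioo (0:ℝ) 2) :
    1 - (Q β (t - 1)).toReal = (M β 0).toReal * ∫ u in (0:ℝ)..t, (u * (2 - u)) ^ (β + 1/2) := by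
  have := nu_prob hβ
  have hcont : Continuous fun s : ℝ => (1 - s ^ 2) ^ (β + 1/2) :=
    Continuous.rpow_const (by fun_prop) fun _ => Or.inr (by linarith)
  have hms : MeasurableSet {w : ℂ | t - 1 < w.im} := measurableSet_lt measurable_const Complex.measurable_im
  have h1 : 1 - (Q β (t - 1)).toReal = (nu β {w : ℂ | t - 1 < w.im}ᶜ).toReal := by
    have := probReal_compl_eq_one_sub (μ := nu β) hms
    exact this.symm
  have h2 : nu β {w : ℂ | t - 1 < w.im}ᶜ = ∫⁻ w : ℂ, (Set.Iic (t - 1)).indicator (fun _ => 1) w.im ∂(nu β) := by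
    rw [← lintegral_indicator_one hms.compl]
    refine lintegral_congr fun w => ?_
    by_cases hw : w.im ≤ t - 1
    · rw [Set.indicator_of_mem (show w.im ∈ Set.Iic (t - 1) from hw), Set.indicator_of_mem]; · rfl
      simpa using hw
    · rw [Set.indicator_of_notMem (show w.im ∉ Set.Iic (t - 1) from hw), Set.indicator_of_notMem]
      simpa using hw
  have h3 : ∫⁻ s in Set.Ioo (-1:ℝ) 1, ENNReal.ofReal ((1 - s ^ 2) ^ (β + 1/2)) *
      (Set.Iic (t - 1)).indicator (fun _ => 1) s =
      ENNReal.ofReal (∫ s in (-1:ℝ)..(t - 1), (1 - s ^ 2) ^ (β + 1/2)) := by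
    have e : ∀ s : ℝ, ENNReal.ofReal ((1 - s ^ 2) ^ (β + 1/2)) *
        (Set.Iic (t - 1)).indicator (fun _ => 1) s =
        (Set.Iic (t - 1)).indicator (fun s => ENNReal.ofReal ((1 - s ^ 2) ^ (β + 1/2))) s := by
      intro s; simp only [Set.indicator]; split_ifs <;> simp
    simp_rw [e]
    rw [setLIntegral_indicator measurableSet_Iic]
    have e2 : Set.Iic (t - 1) ∩ Set.Ioo (-1:ℝ) 1 = Set.Ioc (-1) (t - 1) := by
      ext s; simp only [Set.mem_inter_iff, Set.mem_Iic, Set.mem_Ioo, Set.mem_Ioc]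
      constructor
      · rintro ⟨a, b, c⟩; exact ⟨b, a⟩
      · rintro ⟨a, b⟩; exact ⟨b, a, by linarith [ht.2]⟩
    rw [e2, intervalIntegral.integral_of_le (by linarith [ht.1]), ofReal_integral_eq_lintegral_ofReal]
    · exact hcont.integrableOn_Icc.mono_set Set.Ioc_subset_Icc_self
    · rw [Filter.EventuallyLE, ae_restrict_iff' measurableSet_Ioc]
      filter_upwards with s hs
      exact Real.rpow_nonneg (by nlinarith [hs.1, hs.2, ht.2]) _
  have h4 : ∫ s in (-1:ℝ)..(t - 1), (1 - s ^ 2) ^ (β + 1/2) = ∫ u in (0:ℝ)..t, (u * (2 - u)) ^ (β + 1/2) := by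
    have := intervalIntegral.integral_comp_sub_right (a := 0) (b := t) (fun s : ℝ => (1 - s ^ 2) ^ (β + 1/2)) 1
    rw [zero_sub] at this
    rw [← this]
    refine intervalIntegral.integral_congr fun u _ => ?_
    change (1 - (u - 1) ^ 2) ^ (β + 1/2) = _
    congr 1; ring
  have h5 : 0 ≤ ∫ u in (0:ℝ)..t, (u * (2 - u)) ^ (β + 1/2) := by
    apply intervalIntegral.integral_nonneg ht.1.le
    intro u hu
    exact Real.rpow_nonneg (mul_nonneg hu.1 (by linarith [hu.2, ht.2])) _
  have hind : Measurable ((Set.Iic (t - 1)).indicator (fun _ => (1:ℝ≥0∞))) :=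
    measurable_const.indicator measurableSet_Iic
  rw [h1, h2, lint_im hβ hind, h3, h4, ENNReal.toReal_mul, ENNReal.toReal_ofReal h5]

lemma IC_toReal {β : ℝ} (hβ : 0 < β) (m : ℕ) :
    (∫⁻ x, ∫⁻ y, T β m x (y - x) ∂(nu β) ∂(nu β)).toReal =
    (ENNReal.ofReal (2 * Real.pi) * W β 0).toReal *
      ∫ t in Set.Ioo (0:ℝ) 2, (t * (2 - t)) ^ (2 * β + 3/2) * (Q β (t - 1)).toReal ^ m := by
  have := nu_prob hβ
  rw [IC_eq hβ, ENNReal.toReal_mul]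
  congr 1
  have e1 : ∫ h in Set.Ioo (-1:ℝ) 1, (1 - h ^ 2) ^ (2 * β + 3/2) * (Q β h).toReal ^ m =
      (∫⁻ h in Set.Ioo (-1:ℝ) 1, ENNReal.ofReal ((1 - h ^ 2) ^ (2 * β + 3/2)) * Q β h ^ m).toReal := by
    rw [integral_eq_lintegral_of_nonneg_ae]
    · congr 1
      refine setLIntegral_congr_fun measurableSet_Ioo fun h hh => ?_
      have h1 : 0 < 1 - h ^ 2 := by nlinarith [hh.1, hh.2]
      change ENNReal.ofReal ((1 - h ^ 2) ^ (2 * β + 3/2) * (Q β h).toReal ^ m) = _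
      rw [ENNReal.ofReal_mul (by positivity), ENNReal.ofReal_pow ENNReal.toReal_nonneg,
        ENNReal.ofReal_toReal]
      exact measure_ne_top _ _
    · rw [Filter.EventuallyLE, ae_restrict_iff' measurableSet_Ioo]
      filter_upwards with h hh
      have h1 : 0 < 1 - h ^ 2 := by nlinarith [hh.1, hh.2]
      have : 0 ≤ (Q β h).toReal := ENNReal.toReal_nonneg
      change 0 ≤ (1 - h ^ 2) ^ (2 * β + 3/2) * (Q β h).toReal ^ m
      positivity
    · apply Measurable.aestronglyMeasurable
      exact Measurable.mul (by fun_prop) ((Q_meas β).ennreal_toReal.pow_const m)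
  rw [← e1, ← integral_Ioc_eq_integral_Ioo, ← integral_Ioc_eq_integral_Ioo,
    ← intervalIntegral.integral_of_le (by norm_num), ← intervalIntegral.integral_of_le (by norm_num)]
  have := intervalIntegral.integral_comp_sub_right (a := 0) (b := 2)
    (fun h : ℝ => (1 - h ^ 2) ^ (2 * β + 3/2) * (Q β h).toReal ^ m) 1
  rw [zero_sub, show (2:ℝ) - 1 = 1 by norm_num] at this
  rw [← this]
  refine intervalIntegral.integral_congr fun u _ => ?_
  change (1 - (u - 1) ^ 2) ^ (2 * β + 3/2) * (Q β (u - 1)).toReal ^ m = _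
  congr 2; ring

lemma W_const {β : ℝ} (hβ : 0 < β) : 0 < (ENNReal.ofReal (2 * Real.pi) * W β 0).toReal := by
  have h := IC_eq hβ 0
  have h1 : ∫⁻ x, ∫⁻ y, T β 0 x (y - x) ∂(nu β) ∂(nu β) = 1 := by
    simp only [T, pow_zero, lintegral_const, nu_univ hβ, mul_one]
  rw [h1] at h
  obtain ⟨h1, h2⟩ := const_of_mul_eq_one h.symm
  exact ENNReal.toReal_pos h1 h2

noncomputable def eC : ℂ ≃ₗᵢ[ℝ] E2 := Complex.orthonormalBasisOneI.repr

lemma eC_D (v w : ℂ) : D (eC v) (eC w) = ((starRingEnd ℂ) v * w).im := by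
  have h : ∀ z : ℂ, (eC z) 0 = z.re ∧ (eC z) 1 = z.im := fun z => ⟨rfl, rfl⟩
  rw [D, (h v).1, (h v).2, (h w).1, (h w).2, Complex.mul_im, Complex.conj_re, Complex.conj_im]
  ring

lemma eC_mp (β : ℝ) : MeasurePreserving eC (nu β) (betaMeasure β) := by
  have hm : Measurable fun x : E2 =>
      ENNReal.ofReal (if ‖x‖ ≤ 1 then (β + 1) / Real.pi * (1 - ‖x‖ ^ 2) ^ β else 0) := by
    refine ENNReal.measurable_ofReal.comp (Measurable.ite ?_ ?_ measurable_const)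
    · exact measurableSet_le (by fun_prop) (by fun_prop)
    · fun_prop
  have h := mp_withDensity (eC.measurePreserving) hm
  simp only [LinearIsometryEquiv.norm_map] at h
  exact h

lemma transfer (β : ℝ) (m : ℕ) :
    ∫⁻ x, ∫⁻ y, (betaMeasure β {z | 0 < D (y - x) (z - x)}) ^ m ∂(betaMeasure β) ∂(betaMeasure β) =
    ∫⁻ x, ∫⁻ y, T β m x (y - x) ∂(nu β) ∂(nu β) := by
  have emb : MeasurableEmbedding eC := eC.toHomeomorph.measurableEmbedding
  rw [← (eC_mp β).lintegral_comp_emb emb]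
  refine lintegral_congr fun x => ?_
  rw [← (eC_mp β).lintegral_comp_emb emb]
  refine lintegral_congr fun y => ?_
  rw [T, ← (eC_mp β).measure_preimage_emb emb]
  congr 2
  ext z
  simp only [Set.mem_preimage, Set.mem_ofPred_eq]
  rw [← map_sub, ← map_sub, eC_D]

lemma mean_eq {β : ℝ} (hβ : 0 < β) {m : ℕ} (hm : 0 < m) :
    meanF0 β (m + 2) = ((m:ℝ) + 2) * ((m:ℝ) + 1) * ((ENNReal.ofReal (2 * Real.pi) * W β 0).toReal *
      ∫ t in Set.Ioo (0:ℝ) 2, (t * (2 - t)) ^ (2 * β + 3/2) * (Q β (t - 1)).toReal ^ m) := by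
  have := nu_prob hβ
  have : IsProbabilityMeasure (betaMeasure β) := by
    constructor
    rw [← (eC_mp β).measure_preimage MeasurableSet.univ.nullMeasurableSet]
    simp
  rw [← IC_toReal hβ, ← transfer]
  exact integral_card hm (betaMeasure β) (withDensity_absolutelyContinuous _ _)

open Filter Topology in
lemma ratio_lim (e : ℝ) : Tendsto (fun m : ℕ => (((m:ℝ) + 2) * ((m:ℝ) + 1)) /
    ((m:ℝ) ^ (2 - e) * ((m:ℝ) + 2) ^ e)) atTop (𝓝 1) := by
  have a : ∀ c : ℝ, Tendsto (fun m : ℕ => 1 + c / (m:ℝ)) atTop (𝓝 1) := fun c => by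
    simpa using (tendsto_const_div_atTop_nhds_zero_nat c).const_add 1
  have b := ((a 2).rpow_const (p := 1 - e) (Or.inl one_ne_zero)).mul (a 1)
  rw [Real.one_rpow, one_mul] at b
  refine b.congr' ?_
  filter_upwards [eventually_ge_atTop 1] with m hm
  have hmp : (0:ℝ) < m := by exact_mod_cast hm
  have h2 : 1 + 2 / (m:ℝ) = (m + 2) / m := by field_simp
  have h1 : 1 + 1 / (m:ℝ) = (m + 1) / m := by field_simp
  rw [h1, h2, Real.div_rpow (by positivity) hmp.le, Real.rpow_sub (by positivity), Real.rpow_sub hmp,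
    Real.rpow_sub hmp, Real.rpow_one, Real.rpow_one, Real.rpow_two]
  have := Real.rpow_pos_of_pos hmp e
  have := Real.rpow_pos_of_pos (by positivity : 0 < (m:ℝ) + 2) e
  field_simp

open Filter Topology in
theorem main {β : ℝ} (hβ : 0 < β) (e : ℝ) (he : e = 1 / (2 * β + 3)) :
    ∃ c : ℝ, 0 < c ∧ Tendsto (fun n : ℕ => meanF0 β n / (n : ℝ) ^ e) atTop (𝓝 c) := by
  set C := (ENNReal.ofReal (2 * Real.pi) * W β 0).toReal with hC
  set k := (M β 0).toReal with hk
  have hCp : 0 < C := W_const hβ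
  have hkp : 0 < k := M_const hβ
  obtain ⟨q1, q2⟩ := q_asymp k (β + 1/2) hkp (by linarith) (fun t => 1 - (Q β (t - 1)).toReal)
    (fun t ht => one_sub_R hβ t ht)
  have hc2 : 0 < k / ((β + 1/2 + 1) * 2 ^ (β + 1/2 + 1)) := by positivity
  have hc1 : 0 < k * 2 ^ (β + 1/2) / (β + 1/2 + 1) := by positivity
  have A := asymp (2 * β + 3/2) (β + 1/2 + 1) _ _ (by linarith) (by linarith) hc2
    (fun t => (Q β (t - 1)).toReal) (R_meas β) (fun t _ => R_nn β t) (fun t ht => by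
      have h1 := q1 t ht
      have h2 := Real.add_one_le_exp (-(k / ((β + 1/2 + 1) * 2 ^ (β + 1/2 + 1))) * t ^ (β + 1/2 + 1))
      linarith) q2
  rw [integral_const_mul, integral_rpow_mul_exp_neg_mul_rpow (by linarith) (by linarith) hc1] at A
  have hL : 0 < (2:ℝ) ^ (2 * β + 3/2) * ((k * 2 ^ (β + 1/2) / (β + 1/2 + 1)) ^ (-(2 * β + 3/2 + 1) / (β + 1/2 + 1)) *
      (1 / (β + 1/2 + 1)) * Real.Gamma ((2 * β + 3/2 + 1) / (β + 1/2 + 1))) := by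
    have : 0 < Real.Gamma ((2 * β + 3/2 + 1) / (β + 1/2 + 1)) := Real.Gamma_pos_of_pos (by positivity)
    positivity
  have B := ((ratio_lim e).mul (A.const_mul C))
  rw [one_mul] at B
  refine ⟨_, mul_pos hCp hL, ?_⟩
  rw [← tendsto_add_atTop_iff_nat 2]
  refine B.congr' ?_
  filter_upwards [eventually_ge_atTop 1] with m hm
  have hmp : (0:ℝ) < m := by exact_mod_cast hm
  have hexp : (2 * β + 3/2 + 1) / (β + 1/2 + 1) = 2 - e := by
    rw [he]; field_simp; ring
  rw [mean_eq hβ hm, hexp, ← hC]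
  have := Real.rpow_pos_of_pos hmp (2 - e)
  have := Real.rpow_pos_of_pos (by positivity : 0 < (m:ℝ) + 2) e
  push_cast
  field_simp
  try ring
end BetaHull

/-- for `d ≥ 5` and `β = d/2 - 2`, there exists `c > 0` such that
`E[f₀(Qₙ)]/n^{1/(d-1)} → c` as `n → ∞`. -/
theorem expectation_vertex_count_asymptotics (d : ℕ) (hd : 5 ≤ d)
    (β : ℝ) (hβ : β = (d : ℝ) / 2 - 2) :
    ∃ c : ℝ, 0 < c ∧
      Filter.Tendsto (fun n : ℕ => meanF0 β n / (n : ℝ) ^ (1 / ((d : ℝ) - 1)))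
        Filter.atTop (nhds c) := by
  have hd' : (5:ℝ) ≤ d := by exact_mod_cast hd
  refine BetaHull.main (by rw [hβ]; linarith) _ ?_
  rw [hβ]; congr 1; ring
end

section
/- Fix an integer d ≥ 5 and set β = d/2 − 2. For every real a > 0, the probability μ_β^{⊗n}( |f₀(Qₙ)/E[f₀(Qₙ)] − 1| ≥ a ) tends to 0 as n → ∞, where Qₙ is the convex hull of n i.i.d. points with law μ_β and f₀(Qₙ) is its number of extreme points. In other words, f₀(Qₙ)/E[f₀(Qₙ)] converges in probability to the constant 1. -/
open MeasureTheory

namespace VCC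

abbrev E2 := EuclideanSpace ℝ (Fin 2)

noncomputable def dens (β : ℝ) (x : E2) : ℝ :=
  if ‖x‖ ≤ 1 then (β + 1) / Real.pi * (1 - ‖x‖ ^ 2) ^ β else 0

lemma betaMeasure_eq (β : ℝ) :
    betaMeasure β = (volume : Measure E2).withDensity fun x => ENNReal.ofReal (dens β x) := rfl

lemma measurable_dens (β : ℝ) : Measurable (dens β) := by
  unfold dens
  refine Measurable.ite (measurableSet_le (by fun_prop) (by fun_prop)) ?_ measurable_const
  fun_prop

lemma dens_nonneg {β : ℝ} (hβ : 0 ≤ β) (x : E2) : 0 ≤ dens β x := by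
  unfold dens
  split_ifs with h
  · have : 0 ≤ 1 - ‖x‖ ^ 2 := by nlinarith [norm_nonneg x]
    have := Real.pi_pos
    positivity
  · exact le_rfl

lemma radial_integral {β : ℝ} (hβ : 0 ≤ β) :
    ∫ y in (0:ℝ)..1, y * (1 - y ^ 2) ^ β = 1 / (2 * (β + 1)) := by
  have h : ∀ y ∈ Set.uIcc (0:ℝ) 1,
      HasDerivAt (fun y : ℝ => -(1 / (2 * (β + 1))) * (1 - y ^ 2) ^ (β + 1))
        (y * (1 - y ^ 2) ^ β) y := by
    intro y hy
    have h1 : HasDerivAt (fun y : ℝ => 1 - y ^ 2) (-(2 * y)) y := by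
      simpa using (hasDerivAt_pow 2 y).const_sub 1
    have h2 := (h1.rpow_const (p := β + 1) (Or.inr (by linarith))).const_mul
      (-(1 / (2 * (β + 1))))
    refine h2.congr_deriv ?_
    have : β + 1 ≠ 0 := by linarith
    rw [add_sub_cancel_right]
    field_simp
  rw [intervalIntegral.integral_eq_sub_of_hasDerivAt h]
  · have : β + 1 ≠ 0 := by linarith
    simp [Real.zero_rpow this]
  · apply Continuous.intervalIntegrable
    exact continuous_id.mul ((by fun_prop : Continuous fun y : ℝ => 1 - y ^ 2).rpow_const
      (fun x => Or.inr hβ))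

lemma integral_dens {β : ℝ} (hβ : 0 ≤ β) : ∫ x, dens β x = 1 := by
  have h := integral_fun_norm_addHaar (volume : Measure E2)
    (fun r : ℝ => if r ≤ 1 then (β + 1) / Real.pi * (1 - r ^ 2) ^ β else 0)
  have h0 : (∫ x, dens β x) = ∫ x : E2, (fun r : ℝ => if r ≤ 1 then (β + 1) / Real.pi * (1 - r ^ 2) ^ β else 0) ‖x‖ := rfl
  rw [h0, h]
  have h1 : (volume : Measure E2).real (Metric.ball 0 1) = Real.pi := by
    rw [Measure.real, EuclideanSpace.volume_ball_fin_two]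
    simp [Real.pi_pos.le]
  rw [h1]
  have h2 : (∫ y in Set.Ioi (0:ℝ), y ^ (Module.finrank ℝ E2 - 1) •
      (if y ≤ 1 then (β + 1) / Real.pi * (1 - y ^ 2) ^ β else 0)) =
      (β + 1) / Real.pi * (1 / (2 * (β + 1))) := by
    rw [← radial_integral hβ, ← intervalIntegral.integral_const_mul,
      intervalIntegral.integral_of_le zero_le_one]
    rw [← integral_indicator measurableSet_Ioi, ← integral_indicator measurableSet_Ioc]
    congr 1
    ext y
    simp only [Set.indicator, Set.mem_Ioi, Set.mem_Ioc, finrank_euclideanSpace, Fintype.card_fin]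
    by_cases h0 : 0 < y <;> by_cases h1 : y ≤ 1 <;> simp [h0, h1]
    ring
  rw [h2]
  have : β + 1 ≠ 0 := by linarith
  have := Real.pi_ne_zero
  simp
  field_simp

lemma isProb {β : ℝ} (hβ : 0 ≤ β) : IsProbabilityMeasure (betaMeasure β) := by
  constructor
  rw [betaMeasure_eq, withDensity_apply _ MeasurableSet.univ, Measure.restrict_univ]
  have hi : Integrable (dens β) := by
    by_contra h
    have := integral_undef h
    rw [integral_dens hβ] at this
    norm_num at this
  rw [← ofReal_integral_eq_lintegral_ofReal hi (Filter.Eventually.of_forall (dens_nonneg hβ)),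
    integral_dens hβ]
  simp

lemma ae_disk (β : ℝ) : ∀ᵐ z ∂(betaMeasure β), ‖z‖ ≤ 1 := by
  rw [betaMeasure_eq, ae_withDensity_iff (by exact (measurable_dens β).ennreal_ofReal)]
  refine Filter.Eventually.of_forall fun z hz => ?_
  by_contra h
  simp [dens, h] at hz

lemma ac_volume (β : ℝ) : betaMeasure β ≪ volume := withDensity_absolutelyContinuous _ _

lemma map_isom (β : ℝ) (f : E2 ≃ₗᵢ[ℝ] E2) : MeasurePreserving f (betaMeasure β) (betaMeasure β) := by
  refine ⟨f.continuous.measurable, ?_⟩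
  ext s hs
  rw [Measure.map_apply f.continuous.measurable hs, betaMeasure_eq,
    withDensity_apply _ hs, withDensity_apply _ (f.continuous.measurable hs),
    ← f.measurePreserving.setLIntegral_comp_preimage hs (measurable_dens β).ennreal_ofReal]
  simp [dens]

lemma cap_eq (β : ℝ) {u v : E2} (hu : ‖u‖ = 1) (hv : ‖v‖ = 1) (r : ℝ) :
    betaMeasure β {z | r ≤ inner ℝ u z} = betaMeasure β {z | r ≤ inner ℝ v z} := by
  set f := Submodule.reflection (ℝ ∙ (u - v))ᗮ
  have hf : f u = v := Submodule.reflection_sub (by rw [hu, hv])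
  have hm : MeasurableSet {z : E2 | r ≤ inner ℝ v z} :=
    measurableSet_le measurable_const (by fun_prop)
  rw [← (map_isom β f).measure_preimage hm.nullMeasurableSet]
  congr 1
  ext z
  simp only [Set.mem_ofPred_eq, Set.mem_preimage]
  rw [← hf, f.inner_map_map]

noncomputable def kap (β s : ℝ) : ENNReal := betaMeasure β {z | 1 - s ≤ z 0}

lemma cap_kap (β : ℝ) {u : E2} (hu : ‖u‖ = 1) (s : ℝ) :
    betaMeasure β {z | 1 - s ≤ inner ℝ u z} = kap β s := by
  rw [cap_eq β hu (v := EuclideanSpace.single 0 1) (by simp), kap]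
  congr 1
  ext z
  simp [EuclideanSpace.inner_single_left]

lemma box_vol (a b c d : ℝ) :
    (volume : Measure E2) {z | z 0 ∈ Set.Icc a b ∧ z 1 ∈ Set.Icc c d} =
      ENNReal.ofReal (b - a) * ENNReal.ofReal (d - c) := by
  have h : {z : E2 | z 0 ∈ Set.Icc a b ∧ z 1 ∈ Set.Icc c d} =
      (@WithLp.ofLp 2 (Fin 2 → ℝ)) ⁻¹' (Set.pi Set.univ ![Set.Icc a b, Set.Icc c d]) := by
    ext z
    simp only [Set.mem_ofPred_eq, Set.mem_preimage, Set.mem_univ_pi, Fin.forall_fin_two]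
    rfl
  rw [h, (PiLp.volume_preserving_ofLp (Fin 2)).measure_preimage, volume_pi_pi, Fin.prod_univ_two]
  · simp
  · apply MeasurableSet.nullMeasurableSet
    apply MeasurableSet.univ_pi
    intro i; fin_cases i <;> exact measurableSet_Icc

lemma norm_sq (z : E2) : ‖z‖ ^ 2 = z 0 ^ 2 + z 1 ^ 2 := by
  rw [EuclideanSpace.real_norm_sq_eq, Fin.sum_univ_two]

lemma box_meas (a b c d : ℝ) :
    MeasurableSet {z : E2 | z 0 ∈ Set.Icc a b ∧ z 1 ∈ Set.Icc c d} := by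
  apply MeasurableSet.inter
  · exact measurableSet_Icc.preimage (by fun_prop : Measurable fun z : E2 => z 0)
  · exact measurableSet_Icc.preimage (by fun_prop : Measurable fun z : E2 => z 1)

lemma kap_upper {β : ℝ} (hβ : 0 ≤ β) : ∃ C : ℝ, 0 < C ∧ ∀ s : ℝ, 0 < s → s ≤ 1 →
    kap β s ≤ ENNReal.ofReal (C * s ^ (β + 3 / 2)) := by
  refine ⟨(β + 1) / Real.pi * 2 ^ β * (2 * √2), by have := Real.pi_pos; positivity, ?_⟩
  intro s hs hs1
  have hpi := Real.pi_pos
  set B := {z : E2 | z 0 ∈ Set.Icc (1 - s) 1 ∧ z 1 ∈ Set.Icc (-√(2 * s)) (√(2 * s))}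
  have hm : MeasurableSet {z : E2 | 1 - s ≤ z 0} := measurableSet_le measurable_const (by fun_prop)
  set D := (β + 1) / Real.pi * (2 * s) ^ β
  have h1 : ∀ z ∈ {z : E2 | 1 - s ≤ z 0}, ENNReal.ofReal (dens β z) ≤
      B.indicator (fun _ => ENNReal.ofReal D) z := by
    intro z hz
    simp only [Set.mem_ofPred_eq] at hz
    unfold dens
    split_ifs with h
    · have h2 : z 0 ^ 2 + z 1 ^ 2 ≤ 1 := by rw [← norm_sq]; nlinarith [norm_nonneg z]
      have h3 : z 0 ≤ 1 := by nlinarith [sq_nonneg (z 1)]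
      have h4 : z 1 ^ 2 ≤ 2 * s := by nlinarith
      have hB : z ∈ B := ⟨⟨hz, h3⟩, abs_le.mp (Real.abs_le_sqrt h4)⟩
      rw [Set.indicator_of_mem hB]
      apply ENNReal.ofReal_le_ofReal
      have : (1 - ‖z‖ ^ 2) ^ β ≤ (2 * s) ^ β := by
        rw [norm_sq]
        apply Real.rpow_le_rpow _ _ hβ
        · linarith
        · nlinarith [sq_nonneg (z 1)]
      simp only [D]
      gcongr
    · simp
  rw [kap, betaMeasure_eq, withDensity_apply _ hm]
  calc _ ≤ ∫⁻ z in {z : E2 | 1 - s ≤ z 0}, B.indicator (fun _ => ENNReal.ofReal D) z :=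
        setLIntegral_mono' hm h1
    _ ≤ ∫⁻ z, B.indicator (fun _ => ENNReal.ofReal D) z := setLIntegral_le_lintegral _ _
    _ = ENNReal.ofReal D * (ENNReal.ofReal (1 - (1 - s)) * ENNReal.ofReal (√(2 * s) - -√(2 * s))) := by
        rw [lintegral_indicator_const (box_meas _ _ _ _), box_vol]
    _ ≤ _ := by
        rw [← ENNReal.ofReal_mul (by linarith), ← ENNReal.ofReal_mul (by positivity)]
        apply ENNReal.ofReal_le_ofReal
        apply le_of_eq
        have : s ^ (β + 3 / 2) = s ^ β * (s * √s) := by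
          rw [Real.rpow_add hs, Real.sqrt_eq_rpow]
          congr 1
          nth_rewrite 2 [← Real.rpow_one s]
          rw [← Real.rpow_add hs]; norm_num
        rw [this]
        simp only [D]
        rw [Real.mul_rpow (by norm_num) hs.le, Real.sqrt_mul (by norm_num)]
        ring

lemma kap_lower {β : ℝ} (hβ : 0 ≤ β) : ∃ c : ℝ, 0 < c ∧ ∀ s : ℝ, 0 < s → s ≤ 1 →
    ENNReal.ofReal (c * s ^ (β + 3 / 2)) ≤ kap β s := by
  refine ⟨(β + 1) / Real.pi * (1 / 2) ^ β * (1 / 2), by have := Real.pi_pos; positivity, ?_⟩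
  intro s hs hs1
  have hpi := Real.pi_pos
  set B := {z : E2 | z 0 ∈ Set.Icc (1 - s) (1 - s / 2) ∧ z 1 ∈ Set.Icc (-(√s / 2)) (√s / 2)}
  have hm : MeasurableSet {z : E2 | 1 - s ≤ z 0} := measurableSet_le measurable_const (by fun_prop)
  set D := (β + 1) / Real.pi * (1 / 2 * s) ^ β
  have h1 : ∀ z ∈ B, ENNReal.ofReal D ≤ ENNReal.ofReal (dens β z) := by
    rintro z ⟨⟨h1, h2⟩, h3, h4⟩
    have h5 : z 1 ^ 2 ≤ s / 4 := by
      have := Real.sq_sqrt hs.le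
      nlinarith
    have h6 : z 0 ^ 2 ≤ 1 - 3 * s / 4 := by nlinarith
    have h7 : ‖z‖ ≤ 1 := by
      have := norm_sq z
      nlinarith [norm_nonneg z]
    unfold dens
    rw [if_pos h7]
    apply ENNReal.ofReal_le_ofReal
    have : (1 / 2 * s) ^ β ≤ (1 - ‖z‖ ^ 2) ^ β := by
      rw [norm_sq]
      apply Real.rpow_le_rpow (by positivity) (by linarith) hβ
    simp only [D]
    gcongr
  rw [kap, betaMeasure_eq, withDensity_apply _ hm]
  have hB : B ⊆ {z : E2 | 1 - s ≤ z 0} := fun z hz => hz.1.1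
  calc _ ≤ ENNReal.ofReal D * (ENNReal.ofReal (1 - s / 2 - (1 - s)) * ENNReal.ofReal (√s / 2 - -(√s / 2))) := by
        rw [← ENNReal.ofReal_mul (by linarith), ← ENNReal.ofReal_mul (by positivity)]
        apply ENNReal.ofReal_le_ofReal
        apply le_of_eq
        have : s ^ (β + 3 / 2) = s ^ β * (s * √s) := by
          rw [Real.rpow_add hs, Real.sqrt_eq_rpow]
          congr 1
          nth_rewrite 2 [← Real.rpow_one s]
          rw [← Real.rpow_add hs]; norm_num
        rw [this]
        simp only [D]
        rw [Real.mul_rpow (by norm_num) hs.le]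
        ring
    _ = ∫⁻ z in B, ENNReal.ofReal D := by
        rw [setLIntegral_const, box_vol]
    _ ≤ ∫⁻ z in B, ENNReal.ofReal (dens β z) := setLIntegral_mono' (box_meas _ _ _ _) h1
    _ ≤ _ := lintegral_mono_set hB

end VCC


namespace VCC

def ori (x y z : E2) : ℝ := (y 0 - x 0) * (z 1 - x 1) - (y 1 - x 1) * (z 0 - x 0)

def Lft (x : Fin 2 → E2) : Set E2 := {z | 0 < ori (x 0) (x 1) z}

noncomputable def qq (β : ℝ) (x : Fin 2 → E2) : ENNReal := betaMeasure β (Lft x)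

lemma inner_eq (x y : E2) : inner ℝ x y = x 0 * y 0 + x 1 * y 1 := by
  simp [PiLp.inner_apply, Fin.sum_univ_two]; ring

lemma normal_exists {x y : E2} (h : x ≠ y) : ∃ u : E2, ∃ c : ℝ, 0 < c ∧ ‖u‖ = 1 ∧
    ∀ z, c * ori x y z = inner ℝ u x - inner ℝ u z := by
  have hn : 0 < ‖y - x‖ := norm_pos_iff.2 (sub_ne_zero.2 (Ne.symm h))
  refine ⟨!₂[(y 1 - x 1) / ‖y - x‖, -(y 0 - x 0) / ‖y - x‖], 1 / ‖y - x‖, by positivity, ?_, ?_⟩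
  · have h1 := norm_sq (y - x)
    have h2 := norm_sq (!₂[(y 1 - x 1) / ‖y - x‖, -(y 0 - x 0) / ‖y - x‖] : E2)
    simp at h1 h2
    rw [div_pow, div_pow, ← add_div] at h2
    have h3 : ((y 1 - x 1) ^ 2 + (x 0 - y 0) ^ 2) / ‖y - x‖ ^ 2 = 1 := by
      rw [div_eq_one_iff_eq (by positivity), h1]; ring
    rw [h3] at h2
    rw [← sq_eq_sq₀ (norm_nonneg _) zero_le_one]
    simpa using h2
  · intro z
    rw [inner_eq, inner_eq]
    simp [ori]
    field_simp
    ring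

lemma Lft_normal {x : Fin 2 → E2} (h : x 0 ≠ x 1) : ∃ u : E2, ‖u‖ = 1 ∧
    (∀ z, z ∈ Lft x ↔ inner ℝ u z < inner ℝ u (x 0)) ∧ inner ℝ u (x 1) = inner ℝ u (x 0) := by
  obtain ⟨u, c, hc, hu, hz⟩ := normal_exists h
  refine ⟨u, hu, fun z => ?_, ?_⟩
  · have := hz z
    constructor
    · intro h
      have : 0 < c * ori (x 0) (x 1) z := mul_pos hc h
      linarith
    · intro h
      have : 0 < c * ori (x 0) (x 1) z := by linarith
      exact (mul_pos_iff_of_pos_left hc).1 this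
  · have := hz (x 1)
    have h2 : ori (x 0) (x 1) (x 1) = 0 := by simp [ori]; ring
    rw [h2] at this
    linarith

lemma line_null (β : ℝ) {x y : E2} (h : x ≠ y) : betaMeasure β {z | ori x y z = 0} = 0 := by
  apply ac_volume β
  obtain ⟨u, c, hc, hu, hz⟩ := normal_exists h
  have hs : {z | ori x y z = 0} = (AffineSubspace.mk' x (ℝ ∙ u)ᗮ : Set E2) := by
    ext z
    simp only [Set.mem_ofPred_eq, SetLike.mem_coe, AffineSubspace.mem_mk',
      Submodule.mem_orthogonal_singleton_iff_inner_right, vsub_eq_sub, inner_sub_right]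
    have := hz z
    constructor
    · intro h; rw [h] at this; linarith
    · intro h
      have h2 : c * ori x y z = 0 := by linarith
      exact (mul_eq_zero.1 h2).resolve_left hc.ne'
  rw [hs]
  apply Measure.addHaar_affineSubspace
  intro htop
  have h1 : x + u ∈ AffineSubspace.mk' x (ℝ ∙ u)ᗮ := by rw [htop]; trivial
  rw [AffineSubspace.mem_mk', Submodule.mem_orthogonal_singleton_iff_inner_right] at h1
  simp [hu] at h1

lemma measurableSet_pairLft : MeasurableSet {p : (Fin 2 → E2) × E2 | p.2 ∈ Lft p.1} := by
  unfold Lft ori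
  simp only [Set.mem_ofPred_eq]
  exact measurableSet_lt measurable_const (by fun_prop)

lemma measurableSet_Lft (x : Fin 2 → E2) : MeasurableSet (Lft x) :=
  measurable_prodMk_left measurableSet_pairLft

lemma measurable_qq (β : ℝ) : Measurable (qq β) :=
  measurable_measure_prodMk_left measurableSet_pairLft

noncomputable def qi (β : ℝ) (x y : Fin 2 → E2) : ENNReal := betaMeasure β (Lft x ∩ Lft y)

lemma measurable_qi (β : ℝ) : Measurable (fun p : (Fin 2 → E2) × (Fin 2 → E2) => qi β p.1 p.2) := by
  have : MeasurableSet {p : ((Fin 2 → E2) × (Fin 2 → E2)) × E2 | p.2 ∈ Lft p.1.1 ∩ Lft p.1.2} := by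
    apply MeasurableSet.inter
    · exact measurableSet_pairLft.preimage
        (by fun_prop : Measurable fun p : ((Fin 2 → E2) × (Fin 2 → E2)) × E2 => (p.1.1, p.2))
    · exact measurableSet_pairLft.preimage
        (by fun_prop : Measurable fun p : ((Fin 2 → E2) × (Fin 2 → E2)) × E2 => (p.1.2, p.2))
  exact measurable_measure_prodMk_left this

def SS (β s : ℝ) : Set ((Fin 2 → E2) × (Fin 2 → E2)) :=
  {p | 1 < qq β p.1 + kap β s ∧ 1 < qq β p.2 + kap β s ∧
    qi β p.1 p.2 + 1 ≠ qq β p.1 + qq β p.2}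

lemma measurableSet_SS (β s : ℝ) : MeasurableSet (SS β s) := by
  have h1 := (measurable_qq β).comp (by fun_prop : Measurable fun p : (Fin 2 → E2) × (Fin 2 → E2) => p.1)
  have h2 := (measurable_qq β).comp (by fun_prop : Measurable fun p : (Fin 2 → E2) × (Fin 2 → E2) => p.2)
  apply MeasurableSet.inter
  · exact measurableSet_lt measurable_const (h1.add_const _)
  apply MeasurableSet.inter
  · exact measurableSet_lt measurable_const (h2.add_const _)
  · exact (measurableSet_eq_fun ((measurable_qi β).add_const _) (h1.add h2)).compl

lemma kap_le_one {β : ℝ} (hβ : 0 ≤ β) (s : ℝ) : kap β s ≤ 1 := by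
  have := isProb hβ
  exact prob_le_one

lemma good_depth {β : ℝ} (hβ : 0 ≤ β) {s : ℝ} {x : Fin 2 → E2} (hq : 1 < qq β x + kap β s) :
    ∃ u : E2, ‖u‖ = 1 ∧ (∀ z, z ∉ Lft x → 1 - s < inner ℝ u z) ∧
      1 - s < inner ℝ u (x 0) ∧ 1 - s < inner ℝ u (x 1) := by
  have := isProb hβ
  have hne : x 0 ≠ x 1 := by
    intro h
    have : Lft x = ∅ := by
      ext z; simp [Lft, ori, h]
    rw [qq, this] at hq
    simp at hq
    exact absurd hq (not_lt.2 (kap_le_one hβ s))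
  obtain ⟨u, hu, hz, h1⟩ := Lft_normal hne
  have hd : 1 - s < inner ℝ u (x 0) := by
    by_contra hcon
    push Not at hcon
    have hsub : {z | 1 - s ≤ inner ℝ u z} ⊆ (Lft x)ᶜ := by
      intro z hz' hL
      have := (hz z).1 hL
      simp only [Set.mem_ofPred_eq] at hz'
      linarith
    have h2 := measure_mono (μ := betaMeasure β) hsub
    rw [cap_kap β hu] at h2
    have h3 : qq β x + betaMeasure β (Lft x)ᶜ = 1 := by
      rw [qq, measure_add_measure_compl (measurableSet_Lft x), measure_univ]
    have : qq β x + kap β s ≤ 1 := by rw [← h3]; gcongr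
    exact absurd hq (not_lt.2 this)
  refine ⟨u, hu, fun z hzL => ?_, hd, by rw [h1]; exact hd⟩
  rw [hz z] at hzL
  push Not at hzL
  linarith

lemma cap_near {u z : E2} {s : ℝ} (hu : ‖u‖ = 1) (hz : ‖z‖ ≤ 1) (h : 1 - s ≤ inner ℝ u z) :
    ‖z - u‖ ^ 2 ≤ 2 * s := by
  rw [norm_sub_sq_real, hu, real_inner_comm]
  nlinarith [norm_nonneg z]

lemma geo {u v w y : E2} {s : ℝ} (hu : ‖u‖ = 1) (hv : ‖v‖ = 1) (hw : ‖w‖ ≤ 1) (hy : ‖y‖ ≤ 1)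
    (h1 : 1 - s ≤ inner ℝ u w) (h2 : 1 - s ≤ inner ℝ v w) (h3 : 1 - s ≤ inner ℝ v y)  :
    1 - 10 * s ≤ inner ℝ u y := by
  have a1 := cap_near hu hw h1
  have a2 := cap_near hv hw h2
  have a3 := cap_near hv hy h3
  have hs : 0 ≤ s := by nlinarith [sq_nonneg ‖w - u‖]
  have h4 : 1 - s ≤ ‖y‖ := by
    have := real_inner_le_norm v y
    rw [hv] at this; linarith
  have h5 : ‖y - u‖ ≤ ‖w - u‖ + ‖w - v‖ + ‖y - v‖ := by
    calc ‖y - u‖ = ‖(w - u) - (w - v) + (y - v)‖ := by congr 1; abel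
      _ ≤ _ := (norm_add_le _ _).trans (by gcongr; exact norm_sub_le _ _)
  have h6 : ‖y - u‖ ^ 2 ≤ 18 * s := by
    have := norm_nonneg (y - u)
    nlinarith [sq_nonneg (‖w - u‖ - ‖w - v‖), sq_nonneg (‖w - u‖ - ‖y - v‖), sq_nonneg (‖w - v‖ - ‖y - v‖)]
  rw [norm_sub_sq_real, hu, real_inner_comm] at h6
  by_cases hs1 : s ≤ 1
  · nlinarith
  · nlinarith [sq_nonneg ‖y‖]

lemma SS_section {β : ℝ} (hβ : 0 ≤ β) (s : ℝ) (x : Fin 2 → E2) :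
    (Measure.pi fun _ : Fin 2 => betaMeasure β) {y | (x, y) ∈ SS β s} ≤ kap β (10 * s) ^ 2 := by
  have := isProb hβ
  by_cases hx : 1 < qq β x + kap β s
  swap
  · have : {y | (x, y) ∈ SS β s} = ∅ := by
      ext y; simp [SS, hx]
    simp [this]
  obtain ⟨u, hu, hLu, -, -⟩ := good_depth hβ hx
  have hae : ∀ᵐ y ∂(Measure.pi fun _ : Fin 2 => betaMeasure β), ∀ i, ‖y i‖ ≤ 1 := by
    rw [ae_all_iff]
    intro i
    exact (measurePreserving_eval (fun _ : Fin 2 => betaMeasure β) i).quasiMeasurePreserving.ae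
      (ae_disk β)
  have hle : (Measure.pi fun _ : Fin 2 => betaMeasure β) {y | (x, y) ∈ SS β s} ≤
      (Measure.pi fun _ : Fin 2 => betaMeasure β)
        (Set.pi Set.univ fun _ => {z | 1 - 10 * s ≤ inner ℝ u z}) := by
    apply measure_mono_ae
    filter_upwards [hae] with y hy hS
    obtain ⟨-, hyq, hne⟩ : _ ∧ _ ∧ _ := hS
    obtain ⟨v, hv, hLv, hv0, hv1⟩ := good_depth hβ hyq
    have hex : ∃ w : E2, ‖w‖ ≤ 1 ∧ w ∉ Lft x ∧ w ∉ Lft y := by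
      by_contra hcon
      push Not at hcon
      apply hne
      have h1 : betaMeasure β (Lft x ∪ Lft y) = 1 := by
        rw [← mem_ae_iff_prob_eq_one ((measurableSet_Lft x).union (measurableSet_Lft y))]
        filter_upwards [ae_disk β] with w hw
        by_cases h : w ∈ Lft x
        · exact Or.inl h
        · exact Or.inr (hcon w hw h)
      have h2 := measure_union_add_inter (μ := betaMeasure β) (Lft x) (measurableSet_Lft y)
      rw [h1] at h2
      simp only [qi, qq]
      rw [← h2, add_comm]
    obtain ⟨w, hw, hwx, hwy⟩ := hex
    have key : ∀ i, 1 - s < inner ℝ v (y i) → 1 - 10 * s ≤ inner ℝ u (y i) := fun i hi =>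
      geo hu hv hw (hy i) (hLu w hwx).le (hLv w hwy).le hi.le
    change y ∈ Set.pi Set.univ _
    rw [Set.mem_univ_pi, Fin.forall_fin_two]
    exact ⟨key 0 hv0, key 1 hv1⟩
  refine hle.trans ?_
  rw [Measure.pi_pi]
  simp only [cap_kap β hu, Finset.prod_const, Finset.card_univ, Fintype.card_fin, le_refl]

lemma pointwise {β : ℝ} (hβ : 0 ≤ β) (s : ℝ) (m : ℕ) (x y : Fin 2 → E2) :
    qi β x y ^ m ≤ qq β x ^ m * qq β y ^ m + (SS β s).indicator (fun p => qq β p.1 ^ m) (x, y)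
      + (1 - kap β s) ^ m := by
  have := isProb hβ
  have hix : qi β x y ≤ qq β x := measure_mono Set.inter_subset_left
  have hiy : qi β x y ≤ qq β y := measure_mono Set.inter_subset_right
  have hk : kap β s ≠ ⊤ := ne_top_of_le_ne_top ENNReal.one_ne_top (kap_le_one hβ s)
  by_cases hx : 1 < qq β x + kap β s
  swap
  · apply le_add_left
    gcongr
    exact hix.trans (ENNReal.le_sub_of_add_le_right hk (not_lt.1 hx))
  by_cases hy : 1 < qq β y + kap β s
  swap
  · apply le_add_left
    gcongr
    exact hiy.trans (ENNReal.le_sub_of_add_le_right hk (not_lt.1 hy))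
  apply le_add_right
  by_cases hS : qi β x y + 1 = qq β x + qq β y
  · apply le_add_right
    rw [← mul_pow]
    gcongr
    have hx1 : qq β x ≤ 1 := prob_le_one
    have hy1 : qq β y ≤ 1 := prob_le_one
    lift qq β x to NNReal using ne_top_of_le_ne_top ENNReal.one_ne_top hx1 with a
    lift qq β y to NNReal using ne_top_of_le_ne_top ENNReal.one_ne_top hy1 with b
    lift qi β x y to NNReal using ne_top_of_le_ne_top (ENNReal.coe_ne_top) hix with c
    norm_cast at *
    have h1 : (c : ℝ) + 1 = a + b := by exact_mod_cast hS
    have h2 : (a : ℝ) ≤ 1 := by exact_mod_cast hx1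
    have h3 : (b : ℝ) ≤ 1 := by exact_mod_cast hy1
    have h4 : (c : ℝ) ≤ a * b := by nlinarith
    exact_mod_cast h4
  · apply le_add_left
    rw [Set.indicator_of_mem (show (x, y) ∈ SS β s from ⟨hx, hy, hS⟩)]
    gcongr

lemma double_integral {β : ℝ} (hβ : 0 ≤ β) (s : ℝ) (m : ℕ) :
    ∫⁻ p, qi β p.1 p.2 ^ m ∂((betaPi β 2).prod (betaPi β 2)) ≤
      (∫⁻ x, qq β x ^ m ∂(betaPi β 2)) ^ 2 +
      kap β (10 * s) ^ 2 * (∫⁻ x, qq β x ^ m ∂(betaPi β 2)) + (1 - kap β s) ^ m := by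
  have := isProb hβ
  have hp : IsProbabilityMeasure (betaPi β 2) := by unfold betaPi; infer_instance
  have hq := (measurable_qq β).pow_const m
  have hq1 : Measurable (fun p : (Fin 2 → E2) × (Fin 2 → E2) => qq β p.1 ^ m) := hq.comp (by fun_prop : Measurable fun p : (Fin 2 → E2) × (Fin 2 → E2) => p.1)
  have hq2 : Measurable (fun p : (Fin 2 → E2) × (Fin 2 → E2) => qq β p.2 ^ m) := hq.comp (by fun_prop : Measurable fun p : (Fin 2 → E2) × (Fin 2 → E2) => p.2)
  have hq12 : Measurable (fun p : (Fin 2 → E2) × (Fin 2 → E2) => qq β p.1 ^ m * qq β p.2 ^ m) := hq1.mul hq2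
  calc _ ≤ ∫⁻ p, (qq β p.1 ^ m * qq β p.2 ^ m + (SS β s).indicator (fun p => qq β p.1 ^ m) p
      + (1 - kap β s) ^ m) ∂((betaPi β 2).prod (betaPi β 2)) :=
        lintegral_mono fun p => pointwise hβ s m p.1 p.2
    _ = (∫⁻ p, qq β p.1 ^ m * qq β p.2 ^ m ∂((betaPi β 2).prod (betaPi β 2))) +
        (∫⁻ p, (SS β s).indicator (fun p => qq β p.1 ^ m) p ∂((betaPi β 2).prod (betaPi β 2))) +
        (1 - kap β s) ^ m := by
        rw [lintegral_add_right _ measurable_const, lintegral_add_left hq12]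
        simp
    _ ≤ _ := by
        gcongr
        · rw [lintegral_prod_mul hq.aemeasurable hq.aemeasurable, sq]
        · rw [lintegral_prod _ (hq1.indicator (measurableSet_SS β s)).aemeasurable]
          have : ∀ x, ∫⁻ y, (SS β s).indicator (fun p => qq β p.1 ^ m) (x, y) ∂(betaPi β 2) ≤
              kap β (10 * s) ^ 2 * qq β x ^ m := by
            intro x
            have h1 : ∀ y, (SS β s).indicator (fun p => qq β p.1 ^ m) (x, y) =
                {y | (x, y) ∈ SS β s}.indicator (fun _ => qq β x ^ m) y := by
              intro y; simp [Set.indicator]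
            simp_rw [h1]
            have hSm : MeasurableSet {y : Fin 2 → E2 | (x, y) ∈ SS β s} :=
              measurable_prodMk_left (measurableSet_SS β s)
            rw [lintegral_indicator_const hSm, mul_comm]
            gcongr
            exact SS_section hβ s x
          calc _ ≤ ∫⁻ x, kap β (10 * s) ^ 2 * qq β x ^ m ∂(betaPi β 2) := lintegral_mono this
            _ = _ := lintegral_const_mul _ hq

end VCC


namespace VCC

def IsEdge {n : ℕ} (ω : Fin n → E2) (g : Fin 2 ↪ Fin n) : Prop :=
  ∀ k, k ∉ Set.range g → ω k ∈ Lft (ω ∘ g)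

open Classical in
noncomputable def edges {n : ℕ} (ω : Fin n → E2) : Finset (Fin 2 ↪ Fin n) :=
  Finset.univ.filter (IsEdge ω)

lemma mem_edges {n : ℕ} {ω : Fin n → E2} {g : Fin 2 ↪ Fin n} : g ∈ edges ω ↔ IsEdge ω g := by
  simp [edges]

lemma emb_ext {n : ℕ} {g g' : Fin 2 ↪ Fin n} (h0 : g 0 = g' 0) (h1 : g 1 = g' 1) : g = g' := by
  ext i
  fin_cases i
  · simp [h0]
  · simp [h1]

lemma not_mem_range {n : ℕ} {g : Fin 2 ↪ Fin n} {k : Fin n} :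
    k ∉ Set.range g ↔ g 0 ≠ k ∧ g 1 ≠ k := by
  simp [Fin.exists_fin_two]

lemma emb_ne {n : ℕ} (g : Fin 2 ↪ Fin n) : g 0 ≠ g 1 := fun h => by
  have := g.injective h
  simp at this

lemma ori_swap (x y z : E2) : ori x z y = - ori x y z := by
  simp only [ori]; ring
lemma ori_swap' (x y z : E2) : ori z y x = - ori x y z := by
  simp only [ori]; ring

lemma edge_unique0 {n : ℕ} {ω : Fin n → E2} {g g' : Fin 2 ↪ Fin n} (h : IsEdge ω g)
    (h' : IsEdge ω g') (h0 : g 0 = g' 0) : g = g' := by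
  apply emb_ext h0
  by_contra h1
  have a1 : 0 < ori (ω (g 0)) (ω (g 1)) (ω (g' 1)) :=
    h (g' 1) (not_mem_range.2 ⟨by rw [h0]; exact emb_ne g', h1⟩)
  have a2 : 0 < ori (ω (g' 0)) (ω (g' 1)) (ω (g 1)) :=
    h' (g 1) (not_mem_range.2 ⟨by rw [← h0]; exact emb_ne g, Ne.symm h1⟩)
  rw [← h0, ori_swap] at a2
  linarith

lemma edge_unique1 {n : ℕ} {ω : Fin n → E2} {g g' : Fin 2 ↪ Fin n} (h : IsEdge ω g)
    (h' : IsEdge ω g') (h0 : g 1 = g' 1) : g = g' := by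
  refine emb_ext ?_ h0
  by_contra h1
  have a1 : 0 < ori (ω (g 0)) (ω (g 1)) (ω (g' 0)) :=
    h (g' 0) (not_mem_range.2 ⟨h1, by rw [h0]; exact (emb_ne g').symm⟩)
  have a2 : 0 < ori (ω (g' 0)) (ω (g' 1)) (ω (g 0)) :=
    h' (g 0) (not_mem_range.2 ⟨Ne.symm h1, by rw [← h0]; exact (emb_ne g).symm⟩)
  rw [← h0, ori_swap'] at a2
  linarith

open Classical in
lemma card_sq_le {n : ℕ} (ω : Fin n → E2) :
    (edges ω).card ^ 2 ≤ 3 * (edges ω).card +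
      ((Finset.univ : Finset ((Fin 2 ↪ Fin n) × (Fin 2 ↪ Fin n))).filter
        (fun p => Disjoint (Set.range p.1) (Set.range p.2) ∧ IsEdge ω p.1 ∧ IsEdge ω p.2)).card := by
  set A := edges ω
  set D := ((Finset.univ : Finset ((Fin 2 ↪ Fin n) × (Fin 2 ↪ Fin n))).filter
        (fun p => Disjoint (Set.range p.1) (Set.range p.2) ∧ IsEdge ω p.1 ∧ IsEdge ω p.2))
  have hsub : A ×ˢ A ⊆ (A.biUnion fun g => (A.filter fun g' => g' = g ∨ g' 0 = g 1 ∨ g' 1 = g 0).image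
      fun g' => (g, g')) ∪ D := by
    rintro ⟨g, g'⟩ hp
    rw [Finset.mem_product] at hp
    obtain ⟨h1, h2⟩ := hp
    simp only at h1 h2
    rw [Finset.mem_union]
    by_cases hd : Disjoint (Set.range g) (Set.range g')
    · right
      simp only [D, Finset.mem_filter, Finset.mem_univ, true_and]
      exact ⟨hd, mem_edges.1 h1, mem_edges.1 h2⟩
    · left
      simp only [Finset.mem_biUnion, Finset.mem_image, Finset.mem_filter]
      refine ⟨g, h1, g', ⟨h2, ?_⟩, rfl⟩
      rw [Set.not_disjoint_iff] at hd
      obtain ⟨k, ⟨i, hi⟩, ⟨j, hj⟩⟩ := hd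
      have hij : g i = g' j := by rw [hi, hj]
      have e1 := mem_edges.1 h1
      have e2 := mem_edges.1 h2
      fin_cases i <;> fin_cases j
      · exact Or.inl (edge_unique0 e1 e2 hij).symm
      · exact Or.inr (Or.inr hij.symm)
      · exact Or.inr (Or.inl hij.symm)
      · exact Or.inl (edge_unique1 e1 e2 hij).symm
  have hc : ∀ g ∈ A, ((A.filter fun g' => g' = g ∨ g' 0 = g 1 ∨ g' 1 = g 0).image
      fun g' => (g, g')).card ≤ 3 := by
    intro g hg
    refine Finset.card_image_le.trans ?_
    rw [Finset.filter_or, Finset.filter_or]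
    have b1 : (A.filter fun g' => g' = g).card ≤ 1 := by
      rw [Finset.card_le_one]
      intro a ha b hb
      rw [Finset.mem_filter] at ha hb
      rw [ha.2, hb.2]
    have b2 : (A.filter fun g' => g' 0 = g 1).card ≤ 1 := by
      rw [Finset.card_le_one]
      intro a ha b hb
      rw [Finset.mem_filter] at ha hb
      exact edge_unique0 (mem_edges.1 ha.1) (mem_edges.1 hb.1) (ha.2.trans hb.2.symm)
    have b3 : (A.filter fun g' => g' 1 = g 0).card ≤ 1 := by
      rw [Finset.card_le_one]
      intro a ha b hb
      rw [Finset.mem_filter] at ha hb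
      exact edge_unique1 (mem_edges.1 ha.1) (mem_edges.1 hb.1) (ha.2.trans hb.2.symm)
    have := Finset.card_union_le (A.filter fun g' => g' = g)
      ((A.filter fun g' => g' 0 = g 1) ∪ (A.filter fun g' => g' 1 = g 0))
    have := Finset.card_union_le (A.filter fun g' => g' 0 = g 1) (A.filter fun g' => g' 1 = g 0)
    omega
  have h1 := Finset.card_le_card hsub
  rw [Finset.card_product, ← sq] at h1
  refine h1.trans ((Finset.card_union_le _ _).trans ?_)
  gcongr
  rw [mul_comm]
  exact Finset.card_biUnion_le_card_mul _ _ _ hc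

def GP {n : ℕ} (ω : Fin n → E2) : Prop :=
  ∀ g : Fin 2 ↪ Fin n, ∀ k, k ∉ Set.range g → ori (ω (g 0)) (ω (g 1)) (ω k) ≠ 0

def mkE {n : ℕ} (i j : Fin n) (h : i ≠ j) : Fin 2 ↪ Fin n :=
  ⟨![i, j], by
    intro a b hab
    fin_cases a <;> fin_cases b <;> simp_all⟩

@[simp] lemma mkE_zero {n : ℕ} (i j : Fin n) (h : i ≠ j) : mkE i j h 0 = i := rfl
@[simp] lemma mkE_one {n : ℕ} (i j : Fin n) (h : i ≠ j) : mkE i j h 1 = j := rfl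

lemma GP.inj {n : ℕ} (hn : 3 ≤ n) {ω : Fin n → E2} (h : GP ω) : Function.Injective ω := by
  intro i j hij
  by_contra hne
  have : ∃ k : Fin n, k ∉ ({i, j} : Finset (Fin n)) := by
    by_contra hcon
    push Not at hcon
    have h1 : (Finset.univ : Finset (Fin n)) ⊆ {i, j} := fun k _ => hcon k
    have h2 := Finset.card_le_card h1
    have h3 := Finset.card_le_two (a := i) (b := j)
    simp at h2
    omega
  obtain ⟨k, hk⟩ := this
  simp at hk
  refine h (mkE i j hne) k (not_mem_range.2 ⟨?_, ?_⟩) ?_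
  · exact Ne.symm hk.1
  · exact Ne.symm hk.2
  · simp [ori, hij]

lemma edge_extreme {n : ℕ} {ω : Fin n → E2} (hinj : Function.Injective ω) {g : Fin 2 ↪ Fin n}
    (h : IsEdge ω g) : ω (g 0) ∈ Set.extremePoints ℝ (convexHull ℝ (Set.range ω)) := by
  set p := ω (g 0)
  set r := ω (g 1)
  -- perturbed functional
  have hd : 0 < (r 0 - p 0) ^ 2 + (r 1 - p 1) ^ 2 := by
    have h1 : r - p ≠ 0 := sub_ne_zero.2 (fun h => (emb_ne g) (hinj h).symm)
    have h2 := norm_sq (r - p)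
    have h3 : 0 < ‖r - p‖ := norm_pos_iff.2 h1
    simp at h2
    rw [← h2]; positivity
  let T : E2 → ℝ := fun z => (r 0 - p 0) * (z 0 - p 0) + (r 1 - p 1) * (z 1 - p 1)
  have hε : ∃ ε : ℝ, 0 < ε ∧ ∀ k, k ∉ Set.range g → 0 < ori p r (ω k) + ε * T (ω k) := by
    have : ∀ k, ∀ᶠ ε in nhdsWithin (0:ℝ) (Set.Ioi 0),
        k ∉ Set.range g → 0 < ori p r (ω k) + ε * T (ω k) := by
      intro k
      by_cases hk : k ∈ Set.range g
      · exact Filter.Eventually.of_forall fun _ h => absurd hk h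
      · have h0 : 0 < ori p r (ω k) := h k hk
        have hc : Filter.Tendsto (fun ε : ℝ => ori p r (ω k) + ε * T (ω k)) (nhdsWithin 0 (Set.Ioi 0))
            (nhds (ori p r (ω k))) := by
          have : Continuous (fun ε : ℝ => ori p r (ω k) + ε * T (ω k)) := by fun_prop
          have := this.tendsto 0
          simp only [zero_mul, add_zero] at this
          exact this.mono_left nhdsWithin_le_nhds
        filter_upwards [hc.eventually (lt_mem_nhds h0)] with ε hε _ using hε
    have h2 := (Filter.eventually_all.2 this).and self_mem_nhdsWithin
    obtain ⟨ε, h3, h4⟩ := h2.exists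
    exact ⟨ε, h4, h3⟩
  obtain ⟨ε, hε0, hε⟩ := hε
  let G : E2 → ℝ := fun z => ori p r z + ε * T z
  have hGaff : ∀ (a b : ℝ) (x y : E2), a + b = 1 → G (a • x + b • y) = a * G x + b * G y := by
    intro a b x y hab
    obtain rfl : b = 1 - a := by linarith
    simp [G, T, ori]; ring
  have hGp : G p = 0 := by simp [G, T, ori]
  have hpts : ∀ k, ω k = p ∨ 0 < G (ω k) := by
    intro k
    by_cases hk : k ∈ Set.range g
    · obtain ⟨i, rfl⟩ := hk
      fin_cases i
      · exact Or.inl rfl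
      · right
        change 0 < ori p r r + ε * ((r 0 - p 0) * (r 0 - p 0) + (r 1 - p 1) * (r 1 - p 1))
        have : ori p r r = 0 := by simp [ori]; ring
        rw [this]
        nlinarith
    · exact Or.inr (hε k hk)
  have hconv : Convex ℝ {z | z = p ∨ 0 < G z} := by
    intro x hx y hy a b ha hb hab
    simp only [Set.mem_ofPred_eq] at hx hy ⊢
    rw [hGaff a b x y hab]
    rcases eq_or_lt_of_le ha with rfl | ha
    · have : b = 1 := by linarith
      subst this; simpa using hy
    rcases eq_or_lt_of_le hb with rfl | hb
    · have : a = 1 := by linarith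
      subst this; simpa using hx
    rcases hx with rfl | hx <;> rcases hy with rfl | hy
    · left; rw [← add_smul, hab, one_smul]
    · right; rw [hGp]; positivity
    · right; rw [hGp]; positivity
    · right; positivity
  have hhull : convexHull ℝ (Set.range ω) ⊆ {z | z = p ∨ 0 < G z} :=
    convexHull_min (by rintro _ ⟨k, rfl⟩; exact hpts k) hconv
  rw [mem_extremePoints]
  refine ⟨subset_convexHull ℝ _ ⟨g 0, rfl⟩, ?_⟩
  intro x hx y hy hxy
  obtain ⟨a, b, ha, hb, hab, hz⟩ := hxy
  have h1 := hGaff a b x y hab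
  rw [hz, hGp] at h1
  have hx' := hhull hx
  have hy' := hhull hy
  rcases hx' with hx' | hx' <;> rcases hy' with hy' | hy'
  · exact ⟨hx', hy'⟩
  · exfalso; rw [hx', hGp] at h1; nlinarith [mul_pos hb hy']
  · exfalso; rw [hy', hGp] at h1; nlinarith [mul_pos ha hx']
  · exfalso; nlinarith [mul_pos hb hy', mul_pos ha hx']

lemma extreme_edge {n : ℕ} (hn : 3 ≤ n) {ω : Fin n → E2} (hgp : GP ω) {i : Fin n}
    (h : ω i ∈ Set.extremePoints ℝ (convexHull ℝ (Set.range ω))) :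
    ∃ g, IsEdge ω g ∧ g 0 = i := by
  have hinj := hgp.inj hn
  have h1 := ((convex_convexHull ℝ (Set.range ω)).mem_extremePoints_iff_mem_sdiff_convexHull_sdiff).1 h
  have h2 : ω i ∉ convexHull ℝ (ω '' {k | k ≠ i}) := by
    intro hcon
    apply h1.2
    refine convexHull_mono ?_ hcon
    rintro _ ⟨k, hk, rfl⟩
    exact ⟨subset_convexHull ℝ _ ⟨k, rfl⟩, fun h => hk (hinj h)⟩
  have hcl : IsClosed (convexHull ℝ (ω '' {k | k ≠ i})) :=
    (Set.toFinite _).isClosed_convexHull ℝ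
  obtain ⟨f, c, hf1, hf2⟩ := geometric_hahn_banach_point_closed (convex_convexHull ℝ _) hcl h2
  set a0 := f (EuclideanSpace.single 0 1)
  set a1 := f (EuclideanSpace.single 1 1)
  have hf : ∀ z : E2, f z = a0 * z 0 + a1 * z 1 := by
    intro z
    have : z = z 0 • EuclideanSpace.single 0 1 + z 1 • EuclideanSpace.single 1 1 := by
      ext j; fin_cases j <;> simp
    conv_lhs => rw [this]
    simp only [map_add, map_smul, smul_eq_mul, a0, a1]
    ring
  have hpos : ∀ k, k ≠ i → 0 < a0 * (ω k 0 - ω i 0) + a1 * (ω k 1 - ω i 1) := by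
    intro k hk
    have := hf2 (ω k) (subset_convexHull ℝ _ ⟨k, hk, rfl⟩)
    rw [hf] at this hf1
    linarith
  let S : Fin n → ℝ := fun k => (a0 * (ω k 1 - ω i 1) - a1 * (ω k 0 - ω i 0)) /
    (a0 * (ω k 0 - ω i 0) + a1 * (ω k 1 - ω i 1))
  have hne : (Finset.univ.filter fun k => k ≠ i).Nonempty := by
    have : (Finset.univ.filter fun k => k ≠ i) = Finset.univ.erase i := by
      ext; simp
    rw [this, ← Finset.card_pos, Finset.card_erase_of_mem (Finset.mem_univ _)]
    simp; omega
  obtain ⟨j, hj, hmin⟩ := Finset.exists_min_image _ S hne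
  simp at hj
  refine ⟨mkE i j (Ne.symm hj), ?_, rfl⟩
  intro k hk
  have hgk := hgp (mkE i j (Ne.symm hj)) k hk
  rw [not_mem_range] at hk
  simp at hk hgk
  have hki : k ≠ i := Ne.symm hk.1
  have hS := hmin k (by simp [hki])
  simp only [S] at hS
  rw [div_le_div_iff₀ (hpos j hj) (hpos k hki)] at hS
  change 0 < ori (ω i) (ω j) (ω k)
  have hid : (a0 ^ 2 + a1 ^ 2) * ori (ω i) (ω j) (ω k) =
      (a0 * (ω k 1 - ω i 1) - a1 * (ω k 0 - ω i 0)) * (a0 * (ω j 0 - ω i 0) + a1 * (ω j 1 - ω i 1)) -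
      (a0 * (ω j 1 - ω i 1) - a1 * (ω j 0 - ω i 0)) * (a0 * (ω k 0 - ω i 0) + a1 * (ω k 1 - ω i 1)) := by
    simp only [ori]; ring
  have ha : 0 < a0 ^ 2 + a1 ^ 2 := by
    by_contra hcon
    have e0 : a0 = 0 := by nlinarith [sq_nonneg a0, sq_nonneg a1]
    have e1 : a1 = 0 := by nlinarith [sq_nonneg a0, sq_nonneg a1]
    have := hpos j hj
    rw [e0, e1] at this
    simp at this
  have h3 : 0 ≤ (a0 ^ 2 + a1 ^ 2) * ori (ω i) (ω j) (ω k) := by rw [hid]; linarith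
  exact lt_of_le_of_ne (nonneg_of_mul_nonneg_right h3 ha) (Ne.symm hgk)

lemma vertCount_eq {n : ℕ} (hn : 3 ≤ n) {ω : Fin n → E2} (hgp : GP ω) :
    vertCount ω = (edges ω).card := by
  have hinj := hgp.inj hn
  unfold vertCount
  congr 1
  rw [← Nat.card_eq_finsetCard]
  symm
  apply Nat.card_congr
  refine Equiv.ofBijective (fun g : edges ω => ⟨ω (g.1 0), edge_extreme hinj (mem_edges.1 g.2)⟩) ⟨?_, ?_⟩
  · intro g g' h
    simp only [Subtype.mk.injEq] at h
    exact Subtype.ext (edge_unique0 (mem_edges.1 g.2) (mem_edges.1 g'.2) (hinj h))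
  · rintro ⟨x, hx⟩
    obtain ⟨i, rfl⟩ := extremePoints_convexHull_subset hx
    obtain ⟨g, hg, rfl⟩ := extreme_edge hn hgp hx
    exact ⟨⟨g, mem_edges.2 hg⟩, rfl⟩

end VCC


namespace VCC

lemma pi_split {E : Type*} [MeasurableSpace E] (μ : Measure E) [IsProbabilityMeasure μ] {n : ℕ}
    {ι : Type*} [Fintype ι] (g : ι ↪ Fin n) {A : Set ((ι → E) × E)} (hA : MeasurableSet A) :
    (Measure.pi fun _ : Fin n => μ) {ω | ∀ k, k ∉ Set.range g → ((fun i => ω (g i)), ω k) ∈ A} =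
      ∫⁻ x, μ {z | (x, z) ∈ A} ^ (n - Fintype.card ι) ∂(Measure.pi fun _ : ι => μ) := by
  classical
  let κ := {k // k ∉ Set.range g}
  let e : ι ⊕ κ ≃ Fin n :=
    (Equiv.sumCongr (Equiv.ofInjective g g.injective) (Equiv.refl _)).trans
      (Equiv.Set.sumCompl (Set.range g))
  have he1 : ∀ i, e (Sum.inl i) = g i := fun i => rfl
  have he2 : ∀ k, e (Sum.inr k) = k.1 := fun k => rfl
  have hm1 := measurePreserving_piCongrLeft (α := fun _ : Fin n => E) (fun _ => μ) e
  have hm2 := measurePreserving_sumPiEquivProdPi_symm (X := fun _ : ι ⊕ κ => E) (fun _ => μ)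
  have hm := hm1.comp hm2
  have hset : MeasurableSet {ω : Fin n → E | ∀ k, k ∉ Set.range g → ((fun i => ω (g i)), ω k) ∈ A} := by
    have : {ω : Fin n → E | ∀ k, k ∉ Set.range g → ((fun i => ω (g i)), ω k) ∈ A} =
      ⋂ k, ⋂ (_ : k ∉ Set.range g), (fun ω : Fin n → E => ((fun i => ω (g i)), ω k)) ⁻¹' A := by
      ext; simp
    rw [this]
    refine MeasurableSet.iInter fun k => MeasurableSet.iInter fun _ => ?_
    exact hA.preimage (by fun_prop)
  rw [← hm.measure_preimage hset.nullMeasurableSet]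
  rw [Measure.prod_apply (hm.measurable hset)]
  apply lintegral_congr
  intro x
  have : Prod.mk x ⁻¹' ((⇑(MeasurableEquiv.piCongrLeft (fun _ : Fin n => E) e) ∘
      ⇑(MeasurableEquiv.sumPiEquivProdPi fun _ : ι ⊕ κ => E).symm) ⁻¹'
        {ω : Fin n → E | ∀ k, k ∉ Set.range g → ((fun i => ω (g i)), ω k) ∈ A}) =
      Set.pi Set.univ fun _ : κ => {z | (x, z) ∈ A} := by
    ext y
    have key : ∀ j : ι ⊕ κ, ((MeasurableEquiv.piCongrLeft (fun _ : Fin n => E) e)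
        ((MeasurableEquiv.sumPiEquivProdPi fun _ : ι ⊕ κ => E).symm (x, y))) (e j) =
        Sum.elim x y j := by
      intro j
      rw [MeasurableEquiv.coe_piCongrLeft, Equiv.piCongrLeft_apply_apply]
      cases j <;> rfl
    simp only [Set.mem_preimage, Function.comp_apply, Set.mem_ofPred_eq, Set.mem_univ_pi]
    have k1 : (fun i => ((MeasurableEquiv.piCongrLeft (fun _ : Fin n => E) e)
        ((MeasurableEquiv.sumPiEquivProdPi fun _ : ι ⊕ κ => E).symm (x, y))) (g i)) = x := by
      ext i; exact key (Sum.inl i)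
    rw [k1]
    constructor
    · intro h k
      have := h k.1 k.2
      have k2 := key (Sum.inr k)
      rw [he2] at k2
      rw [k2] at this
      exact this
    · intro h k hk
      have k2 := key (Sum.inr ⟨k, hk⟩)
      rw [he2] at k2
      simp only at k2
      rw [k2]
      exact h ⟨k, hk⟩
  rw [this, Measure.pi_pi]
  simp only [Finset.prod_const, Finset.card_univ]
  congr 1
  have h1 := Fintype.card_congr e
  rw [Fintype.card_sum, Fintype.card_fin] at h1
  omega

lemma isProbPi {β : ℝ} (hβ : 0 ≤ β) (n : ℕ) : IsProbabilityMeasure (betaPi β n) := by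
  have := isProb hβ
  unfold betaPi; infer_instance

lemma measurableSet_edge {n : ℕ} (g : Fin 2 ↪ Fin n) : MeasurableSet {ω | IsEdge ω g} := by
  have : {ω : Fin n → E2 | IsEdge ω g} =
      ⋂ k, ⋂ (_ : k ∉ Set.range g), (fun ω : Fin n → E2 => ((fun i => ω (g i)), ω k)) ⁻¹'
        {p | p.2 ∈ Lft p.1} := by
    ext; simp [IsEdge, Function.comp_def]
  rw [this]
  refine MeasurableSet.iInter fun k => MeasurableSet.iInter fun _ => ?_
  exact measurableSet_pairLft.preimage (by fun_prop)

lemma edge_prob {β : ℝ} (hβ : 0 ≤ β) {n : ℕ} (g : Fin 2 ↪ Fin n) :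
    betaPi β n {ω | IsEdge ω g} = ∫⁻ x, qq β x ^ (n - 2) ∂(betaPi β 2) := by
  have := isProb hβ
  have h := pi_split (betaMeasure β) g measurableSet_pairLft
  rw [Fintype.card_fin] at h
  exact h

lemma pair_prob {β : ℝ} (hβ : 0 ≤ β) {n : ℕ} (g g' : Fin 2 ↪ Fin n)
    (hd : Disjoint (Set.range g) (Set.range g')) :
    betaPi β n {ω | IsEdge ω g ∧ IsEdge ω g'} ≤
      ∫⁻ p, qi β p.1 p.2 ^ (n - 4) ∂((betaPi β 2).prod (betaPi β 2)) := by
  have := isProb hβ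
  let G : Fin 2 ⊕ Fin 2 ↪ Fin n := ⟨Sum.elim g g', by
    apply Function.Injective.sumElim g.injective g'.injective
    intro a b h
    exact Set.disjoint_left.1 hd ⟨a, rfl⟩ ⟨b, h.symm⟩⟩
  let A : Set ((Fin 2 ⊕ Fin 2 → E2) × E2) :=
    {p | p.2 ∈ Lft (fun i => p.1 (Sum.inl i)) ∧ p.2 ∈ Lft (fun i => p.1 (Sum.inr i))}
  have hA : MeasurableSet A := by
    apply MeasurableSet.inter
    · exact measurableSet_pairLft.preimage
        (by fun_prop : Measurable fun p : (Fin 2 ⊕ Fin 2 → E2) × E2 => ((fun i => p.1 (Sum.inl i)), p.2))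
    · exact measurableSet_pairLft.preimage
        (by fun_prop : Measurable fun p : (Fin 2 ⊕ Fin 2 → E2) × E2 => ((fun i => p.1 (Sum.inr i)), p.2))
  have h := pi_split (betaMeasure β) G hA
  have hm := measurePreserving_sumPiEquivProdPi_symm (X := fun _ : Fin 2 ⊕ Fin 2 => E2)
    (fun _ => betaMeasure β)
  rw [← hm.lintegral_comp_emb (MeasurableEquiv.measurableEmbedding _)] at h
  have hcard : Fintype.card (Fin 2 ⊕ Fin 2) = 4 := by simp
  rw [hcard] at h
  refine le_trans (measure_mono ?_) (le_of_eq h)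
  rintro ω ⟨h1, h2⟩ k hk
  refine ⟨h1 k fun ⟨i, hi⟩ => hk ⟨Sum.inl i, hi⟩, h2 k fun ⟨i, hi⟩ => hk ⟨Sum.inr i, hi⟩⟩

lemma ae_GP {β : ℝ} (hβ : 0 ≤ β) (n : ℕ) : ∀ᵐ ω ∂(betaPi β n), GP ω := by
  have := isProb hβ
  have hP := isProbPi hβ n
  have hP2 := isProbPi hβ 2
  unfold GP
  rw [ae_all_iff]
  intro g
  have hA : MeasurableSet {p : (Fin 2 → E2) × E2 | ori (p.1 0) (p.1 1) p.2 ≠ 0} := by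
    unfold ori
    exact (measurableSet_eq_fun (by fun_prop) measurable_const).compl
  have h := pi_split (betaMeasure β) g hA
  have hne : ∀ᵐ x ∂(betaPi β 2), x 0 ≠ x 1 := by
    have hs : ∀ x : E2, betaMeasure β {x} = 0 := fun x => ac_volume β (measure_singleton x)
    have hm := measurePreserving_piFinTwo (fun _ : Fin 2 => betaMeasure β)
    have hd : MeasurableSet {p : E2 × E2 | p.1 = p.2} := measurableSet_eq_fun (by fun_prop) (by fun_prop)
    have h0 : ((betaMeasure β).prod (betaMeasure β)) {p : E2 × E2 | p.1 = p.2} = 0 := by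
      rw [Measure.prod_apply hd]
      have : ∀ x : E2, Prod.mk x ⁻¹' {p : E2 × E2 | p.1 = p.2} = {x} := by
        intro x; ext y; simp [eq_comm]
      simp [this, hs]
    rw [← hm.measure_preimage hd.nullMeasurableSet] at h0
    have h0' : betaPi β 2 {a | a 0 = a 1} = 0 := h0
    rw [ae_iff]
    simpa using h0'
  have h1 : ∫⁻ x, betaMeasure β {z | (x, z) ∈ {p : (Fin 2 → E2) × E2 | ori (p.1 0) (p.1 1) p.2 ≠ 0}} ^
      (n - Fintype.card (Fin 2)) ∂(Measure.pi fun _ : Fin 2 => betaMeasure β) = 1 := by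
    have : ∀ᵐ x ∂(Measure.pi fun _ : Fin 2 => betaMeasure β),
        betaMeasure β {z | (x, z) ∈ {p : (Fin 2 → E2) × E2 | ori (p.1 0) (p.1 1) p.2 ≠ 0}} ^
      (n - Fintype.card (Fin 2)) = 1 := by
      filter_upwards [hne] with x hx
      have hA' : MeasurableSet {z | ori (x 0) (x 1) z ≠ 0} := measurable_prodMk_left hA
      have h2 : betaMeasure β {z | ori (x 0) (x 1) z ≠ 0} = 1 := by
        have h3 := line_null β hx
        rw [← prob_compl_eq_zero_iff hA']
        convert h3 using 2
        ext z; simp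
      change betaMeasure β {z | ori (x 0) (x 1) z ≠ 0} ^ _ = 1
      rw [h2, one_pow]
    rw [lintegral_congr_ae this]
    simp
  rw [h1] at h
  have hset : MeasurableSet {ω : Fin n → E2 | ∀ k, k ∉ Set.range g → ((fun i => ω (g i)), ω k) ∈
      {p : (Fin 2 → E2) × E2 | ori (p.1 0) (p.1 1) p.2 ≠ 0}} := by
    have : {ω : Fin n → E2 | ∀ k, k ∉ Set.range g → ((fun i => ω (g i)), ω k) ∈
      {p : (Fin 2 → E2) × E2 | ori (p.1 0) (p.1 1) p.2 ≠ 0}} =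
      ⋂ k, ⋂ (_ : k ∉ Set.range g), (fun ω : Fin n → E2 => ((fun i => ω (g i)), ω k)) ⁻¹'
        {p : (Fin 2 → E2) × E2 | ori (p.1 0) (p.1 1) p.2 ≠ 0} := by
      ext; simp
    rw [this]
    refine MeasurableSet.iInter fun k => MeasurableSet.iInter fun _ => ?_
    exact hA.preimage (by fun_prop)
  exact (mem_ae_iff_prob_eq_one hset).2 h

lemma card_eq_sum {n : ℕ} (ω : Fin n → E2) :
    ((edges ω).card : ENNReal) = ∑ g, {ω | IsEdge ω g}.indicator (fun _ => (1 : ENNReal)) ω := by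
  classical
  rw [edges, Finset.card_filter]
  push_cast
  apply Finset.sum_congr rfl
  intro g _
  simp [Set.indicator]

lemma measurable_card (n : ℕ) : Measurable (fun ω : Fin n → E2 => ((edges ω).card : ENNReal)) := by
  simp_rw [card_eq_sum]
  exact Finset.measurable_sum _ fun g _ => measurable_const.indicator (measurableSet_edge g)

noncomputable def II (β : ℝ) (m : ℕ) : ENNReal := ∫⁻ x, qq β x ^ m ∂(betaPi β 2)

lemma lintegral_card {β : ℝ} (hβ : 0 ≤ β) (n : ℕ) :
    ∫⁻ ω, ((edges ω).card : ENNReal) ∂(betaPi β n) = (n * (n - 1) : ℕ) * II β (n - 2) := by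
  simp_rw [card_eq_sum]
  rw [lintegral_finsetSum _ fun g _ => measurable_const.indicator (measurableSet_edge g)]
  simp_rw [lintegral_indicator_const (measurableSet_edge _), edge_prob hβ]
  simp [Fintype.card_embedding_eq, II, Nat.descFactorial]
  rw [mul_comm ((n : ENNReal) - 1) (n : ENNReal)]

open Classical in
lemma lintegral_card_sq {β : ℝ} (hβ : 0 ≤ β) (n : ℕ) (s : ℝ) :
    ∫⁻ ω, ((edges ω).card : ENNReal) ^ 2 ∂(betaPi β n) ≤ 3 * ((n * (n - 1) : ℕ) * II β (n - 2)) +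
      ((n * (n - 1) : ℕ) : ENNReal) ^ 2 * (II β (n - 4) ^ 2 + kap β (10 * s) ^ 2 * II β (n - 4)
        + (1 - kap β s) ^ (n - 4)) := by
  set DD := (Finset.univ : Finset ((Fin 2 ↪ Fin n) × (Fin 2 ↪ Fin n))).filter
        (fun p => Disjoint (Set.range p.1) (Set.range p.2))
  have hms : ∀ p : (Fin 2 ↪ Fin n) × (Fin 2 ↪ Fin n),
      MeasurableSet {ω | IsEdge ω p.1 ∧ IsEdge ω p.2} := fun p =>
    (measurableSet_edge p.1).inter (measurableSet_edge p.2)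
  have hpt : ∀ ω : Fin n → E2, ((edges ω).card : ENNReal) ^ 2 ≤ 3 * ((edges ω).card : ENNReal) +
      ∑ p ∈ DD, {ω | IsEdge ω p.1 ∧ IsEdge ω p.2}.indicator (fun _ => (1 : ENNReal)) ω := by
    intro ω
    have h := card_sq_le ω
    rw [← Finset.filter_filter, Finset.card_filter] at h
    have h2 : (((edges ω).card ^ 2 : ℕ) : ENNReal) ≤ _ := Nat.cast_le.2 h
    push_cast at h2
    refine h2.trans (le_of_eq ?_)
    congr 1
    apply Finset.sum_congr rfl
    intro p _
    simp [Set.indicator]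
  calc _ ≤ ∫⁻ ω, (3 * ((edges ω).card : ENNReal) +
      ∑ p ∈ DD, {ω | IsEdge ω p.1 ∧ IsEdge ω p.2}.indicator (fun _ => (1 : ENNReal)) ω) ∂(betaPi β n) :=
        lintegral_mono hpt
    _ = 3 * ((n * (n - 1) : ℕ) * II β (n - 2)) +
        ∑ p ∈ DD, betaPi β n {ω | IsEdge ω p.1 ∧ IsEdge ω p.2} := by
        rw [lintegral_add_left ((measurable_card n).const_mul 3),
          lintegral_const_mul _ (measurable_card n), lintegral_card hβ,
          lintegral_finsetSum _ fun p _ => measurable_const.indicator (hms p)]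
        simp_rw [lintegral_indicator_const (hms _), one_mul]
    _ ≤ 3 * ((n * (n - 1) : ℕ) * II β (n - 2)) +
        ∑ p ∈ DD, (II β (n - 4) ^ 2 + kap β (10 * s) ^ 2 * II β (n - 4)
        + (1 - kap β s) ^ (n - 4)) := by
        gcongr with p hp
        exact (pair_prob hβ p.1 p.2 (Finset.mem_filter.1 hp).2).trans (double_integral hβ s (n - 4))
    _ ≤ _ := by
        rw [Finset.sum_const, nsmul_eq_mul]
        gcongr
        have h1 : DD.card ≤ (n * (n - 1)) ^ 2 := by
          refine (Finset.card_filter_le _ _).trans (le_of_eq ?_)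
          simp [Fintype.card_embedding_eq, Nat.descFactorial]
          ring
        exact_mod_cast h1

end VCC


namespace VCC

lemma hit_extreme {n : ℕ} (ω : Fin n → E2) (u : E2) (r : ℝ) (k : Fin n) (hk : r ≤ inner ℝ u (ω k)) :
    ∃ x ∈ Set.extremePoints ℝ (convexHull ℝ (Set.range ω)), r ≤ inner ℝ u x := by
  by_contra hcon
  push Not at hcon
  have hfin : (Set.extremePoints ℝ (convexHull ℝ (Set.range ω))).Finite :=
    (Set.finite_range ω).subset extremePoints_convexHull_subset
  have h1 := closure_convexHull_extremePoints ((Set.finite_range ω).isCompact_convexHull (𝕜 := ℝ))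
    (convex_convexHull ℝ (Set.range ω))
  rw [(hfin.isCompact_convexHull (𝕜 := ℝ)).isClosed.closure_eq] at h1
  have h2 : convexHull ℝ (Set.extremePoints ℝ (convexHull ℝ (Set.range ω))) ⊆
      {z | inner ℝ u z < r} := by
    apply convexHull_min
    · exact fun x hx => hcon x hx
    · exact convex_halfSpace_lt (f := fun z => inner ℝ u z)
        ⟨fun x y => inner_add_right _ _ _, fun c x => by simp [inner_smul_right]⟩ r
  have h3 : ω k ∈ convexHull ℝ (Set.range ω) := subset_convexHull ℝ _ ⟨k, rfl⟩
  rw [← h1] at h3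
  exact absurd (h2 h3) (not_lt.2 hk)

open Classical in
lemma vert_lower {n M : ℕ} {ω : Fin n → E2} (hω : ∀ k, ‖ω k‖ ≤ 1) {u : Fin M → E2}
    (hu : ∀ i, ‖u i‖ = 1) {s : ℝ} (hs : ∀ i j, i ≠ j → 8 * s < ‖u i - u j‖ ^ 2) :
    (((Finset.univ.filter fun i => ∃ k, 1 - s ≤ inner ℝ (u i) (ω k)).card : ℕ) : ℝ) ≤ vertCount ω := by
  have hfin : Finite (Set.extremePoints ℝ (convexHull ℝ (Set.range ω))) :=
    (Set.finite_range ω).subset extremePoints_convexHull_subset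
  unfold vertCount
  rw [Nat.cast_le, ← Nat.card_eq_finsetCard]
  have hx : ∀ i : {i // i ∈ Finset.univ.filter fun i => ∃ k, 1 - s ≤ inner ℝ (u i) (ω k)},
      ∃ x ∈ Set.extremePoints ℝ (convexHull ℝ (Set.range ω)), 1 - s ≤ inner ℝ (u i.1) x := by
    rintro ⟨i, hi⟩
    obtain ⟨k, hk⟩ := (Finset.mem_filter.1 hi).2
    exact hit_extreme ω (u i) _ k hk
  choose x hx1 hx2 using hx
  refine Nat.card_le_card_of_injective (fun i => (⟨x i, hx1 i⟩ : Set.extremePoints ℝ (convexHull ℝ (Set.range ω)))) ?_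
  intro i j hij
  have hij' : x i = x j := congrArg Subtype.val hij
  by_contra hne
  have h8 := hs i.1 j.1 fun h => hne (Subtype.ext h)
  have hb : ‖x i‖ ≤ 1 := by
    have h1 : x i ∈ convexHull ℝ (Set.range ω) := (hx1 i).1
    have h2 : convexHull ℝ (Set.range ω) ⊆ Metric.closedBall 0 1 := by
      apply convexHull_min _ (convex_closedBall 0 1)
      rintro _ ⟨k, rfl⟩
      simpa using hω k
    simpa using h2 h1
  have a1 := cap_near (hu i.1) hb (hx2 i)
  have a2 := cap_near (hu j.1) hb (by rw [hij']; exact hx2 j)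
  have h3 : ‖u i.1 - u j.1‖ ≤ ‖x i - u i.1‖ + ‖x i - u j.1‖ := by
    calc _ = ‖(x i - u j.1) - (x i - u i.1)‖ := by congr 1; abel
      _ ≤ _ := by rw [add_comm]; exact norm_sub_le _ _
  have := norm_nonneg (u i.1 - u j.1)
  nlinarith [sq_nonneg (‖x i - u i.1‖ - ‖x i - u j.1‖)]

lemma units (M : ℕ) {t : ℝ} (ht : 0 < t) (hM : M * t ≤ 1) : ∃ u : Fin M → E2, (∀ i, ‖u i‖ = 1) ∧
    ∀ i j, i ≠ j → t ^ 2 ≤ ‖u i - u j‖ ^ 2 := by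
  refine ⟨fun k => !₂[k * t, √(1 - (k * t) ^ 2)], fun k => ?_, fun i j hij => ?_⟩
  · have h1 : ((k : ℕ) : ℝ) * t ≤ 1 := by
      refine le_trans ?_ hM
      gcongr
      exact k.2.le
    have h0 : 0 ≤ ((k : ℕ) : ℝ) * t := by positivity
    have h2 := norm_sq !₂[(k : ℕ) * t, √(1 - ((k : ℕ) * t) ^ 2)]
    have h3 : (0:ℝ) ≤ 1 - ((k : ℕ) * t) ^ 2 := by nlinarith
    simp [Real.sq_sqrt h3] at h2
    rcases h2 with h | h
    · simpa using h
    · have := norm_nonneg !₂[(k : ℕ) * t, √(1 - ((k : ℕ) * t) ^ 2)]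
      rw [h] at this; norm_num at this
  · rw [norm_sq]
    have h1 : (1:ℝ) ≤ (((i : ℕ) : ℝ) - ((j : ℕ) : ℝ)) ^ 2 := by
      have : (1 : ℤ) ≤ (((i : ℕ) : ℤ) - ((j : ℕ) : ℤ)) ^ 2 := by
        have h2 : ((i : ℕ) : ℤ) - ((j : ℕ) : ℤ) ≠ 0 := by
          intro h; apply hij; ext; omega
        have := sq_pos_of_ne_zero h2
        omega
      exact_mod_cast this
    have h2 : t ^ 2 ≤ (((i : ℕ) : ℝ) * t - ((j : ℕ) : ℝ) * t) ^ 2 := by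
      have : (((i : ℕ) : ℝ) * t - ((j : ℕ) : ℝ) * t) ^ 2 = (((i : ℕ) : ℝ) - ((j : ℕ) : ℝ)) ^ 2 * t ^ 2 := by ring
      rw [this]; nlinarith [sq_nonneg t]
    simp only [PiLp.sub_apply]
    simp
    nlinarith [sq_nonneg (√(1 - (((i : ℕ) : ℝ) * t) ^ 2) - √(1 - (((j : ℕ) : ℝ) * t) ^ 2))]

lemma hit_prob {β : ℝ} (hβ : 0 ≤ β) (n : ℕ) {u : E2} (hu : ‖u‖ = 1) (s : ℝ) :
    MeasurableSet {ω : Fin n → E2 | ∃ k, 1 - s ≤ inner ℝ u (ω k)} ∧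
    betaPi β n {ω | ∃ k, 1 - s ≤ inner ℝ u (ω k)} = 1 - (1 - kap β s) ^ n := by
  have := isProb hβ
  have := isProbPi hβ n
  have hm : MeasurableSet {z : E2 | 1 - s ≤ inner ℝ u z} :=
    measurableSet_le measurable_const (by fun_prop)
  have hs : {ω : Fin n → E2 | ∃ k, 1 - s ≤ inner ℝ u (ω k)}ᶜ =
      Set.pi Set.univ fun _ => {z : E2 | 1 - s ≤ inner ℝ u z}ᶜ := by
    ext ω; simp [Set.mem_pi]
  have hms : MeasurableSet {ω : Fin n → E2 | ∃ k, 1 - s ≤ inner ℝ u (ω k)} := by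
    rw [← MeasurableSet.compl_iff, hs]
    exact MeasurableSet.univ_pi fun _ => hm.compl
  refine ⟨hms, ?_⟩
  have h1 : betaPi β n {ω : Fin n → E2 | ∃ k, 1 - s ≤ inner ℝ u (ω k)}ᶜ = (1 - kap β s) ^ n := by
    rw [hs, betaPi, Measure.pi_pi]
    rw [prob_compl_eq_one_sub hm, cap_kap β hu s]
    simp
  rw [← h1, prob_compl_eq_one_sub hms, ENNReal.sub_sub_cancel (by simp) prob_le_one]

lemma ae_disk_pi {β : ℝ} (hβ : 0 ≤ β) (n : ℕ) : ∀ᵐ ω ∂(betaPi β n), ∀ k, ‖ω k‖ ≤ 1 := by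
  have := isProb hβ
  rw [ae_all_iff]
  intro k
  exact (measurePreserving_eval (fun _ : Fin n => betaMeasure β) k).quasiMeasurePreserving.ae (ae_disk β)

open Classical in
lemma card_lower {β : ℝ} (hβ : 0 ≤ β) {n : ℕ} (hn : 3 ≤ n) {s : ℝ} (hs : 0 < s) {M : ℕ}
    (hM : M * (3 * √s) ≤ 1) :
    M * (1 - (1 - kap β s) ^ n) ≤ ∫⁻ ω, ((edges ω).card : ENNReal) ∂(betaPi β n) := by
  obtain ⟨u, hu, hd⟩ := units M (by positivity) hM
  have hd' : ∀ i j, i ≠ j → 8 * s < ‖u i - u j‖ ^ 2 := by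
    intro i j hij
    have := hd i j hij
    rw [mul_pow, Real.sq_sqrt hs.le] at this
    linarith
  calc M * (1 - (1 - kap β s) ^ n) = ∑ i : Fin M, betaPi β n {ω | ∃ k, 1 - s ≤ inner ℝ (u i) (ω k)} := by
        rw [Finset.sum_congr rfl fun i _ => (hit_prob hβ n (hu i) s).2]
        simp
    _ = ∫⁻ ω, ∑ i : Fin M, {ω : Fin n → E2 | ∃ k, 1 - s ≤ inner ℝ (u i) (ω k)}.indicator (fun _ => (1 : ENNReal)) ω ∂(betaPi β n) := by
        rw [lintegral_finsetSum _ fun g _ => measurable_const.indicator (hit_prob hβ n (hu _) s).1]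
        simp_rw [lintegral_indicator_const (hit_prob hβ n (hu _) s).1, one_mul]
    _ ≤ _ := by
        apply lintegral_mono_ae
        filter_upwards [ae_GP hβ n, ae_disk_pi hβ n] with ω h1 h2
        have h3 := vert_lower h2 hu hd'
        rw [vertCount_eq hn h1, Nat.cast_le] at h3
        have h4 : ((_ : ℕ) : ENNReal) ≤ _ := Nat.cast_le.2 h3
        refine le_trans (le_of_eq ?_) h4
        rw [Finset.card_filter]
        push_cast
        apply Finset.sum_congr rfl
        intro i _
        simp [Set.indicator]

lemma qq_le_one {β : ℝ} (hβ : 0 ≤ β) (x) : qq β x ≤ 1 := by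
  have := isProb hβ
  exact prob_le_one

lemma II_le_one {β : ℝ} (hβ : 0 ≤ β) (m : ℕ) : II β m ≤ 1 := by
  have := isProbPi hβ 2
  calc II β m ≤ ∫⁻ _, 1 ∂(betaPi β 2) := lintegral_mono fun x => pow_le_one₀ (by simp) (qq_le_one hβ x)
    _ = 1 := by simp

lemma II_compare {β : ℝ} (hβ : 0 ≤ β) (s : ℝ) (m : ℕ) :
    (1 - kap β s) ^ 2 * II β m ≤ II β (m + 2) + (1 - kap β s) ^ m := by
  have := isProbPi hβ 2
  unfold II
  rw [← lintegral_const_mul _ ((measurable_qq β).pow_const m)]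
  calc _ ≤ ∫⁻ x, (qq β x ^ (m + 2) + (1 - kap β s) ^ m) ∂(betaPi β 2) := by
        apply lintegral_mono
        intro x
        rcases le_total (1 - kap β s) (qq β x) with h | h
        · refine le_trans ?_ le_self_add
          rw [pow_add, mul_comm (qq β x ^ m)]
          exact mul_le_mul' (pow_le_pow_left' h 2) le_rfl
        · refine le_trans ?_ le_add_self
          calc (1 - kap β s) ^ 2 * qq β x ^ m ≤ 1 * (1 - kap β s) ^ m := by
                gcongr
                exact pow_le_one₀ (by simp) tsub_le_self
            _ = _ := one_mul _
    _ = _ := by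
        rw [lintegral_add_right _ measurable_const]; simp

end VCC


namespace VCC

noncomputable def kr (β s : ℝ) : ℝ := (kap β s).toReal
noncomputable def Ir (β : ℝ) (m : ℕ) : ℝ := (II β m).toReal
noncomputable def ee (β : ℝ) (n : ℕ) : ℝ := ((n * (n - 1) : ℕ) : ℝ) * Ir β (n - 2)

lemma kr_nonneg (β s : ℝ) : 0 ≤ kr β s := ENNReal.toReal_nonneg
lemma Ir_nonneg (β : ℝ) (m : ℕ) : 0 ≤ Ir β m := ENNReal.toReal_nonneg

lemma kap_ne {β : ℝ} (hβ : 0 ≤ β) (s : ℝ) : kap β s ≠ ⊤ := ((kap_le_one hβ s).trans_lt ENNReal.one_lt_top).ne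
lemma II_ne {β : ℝ} (hβ : 0 ≤ β) (m : ℕ) : II β m ≠ ⊤ := ((II_le_one hβ m).trans_lt ENNReal.one_lt_top).ne
lemma kr_le_one {β : ℝ} (hβ : 0 ≤ β) (s : ℝ) : kr β s ≤ 1 :=
  ENNReal.toReal_le_of_le_ofReal (by norm_num) (by simpa using kap_le_one hβ s)

lemma one_sub_kap {β : ℝ} (hβ : 0 ≤ β) (s : ℝ) : 1 - kap β s = ENNReal.ofReal (1 - kr β s) := by
  rw [ENNReal.ofReal_sub _ (kr_nonneg β s), kr, ENNReal.ofReal_toReal (kap_ne hβ s), ENNReal.ofReal_one]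

lemma kap_of {β : ℝ} (hβ : 0 ≤ β) (s : ℝ) : kap β s = ENNReal.ofReal (kr β s) := by
  rw [kr, ENNReal.ofReal_toReal (kap_ne hβ s)]
lemma II_of {β : ℝ} (hβ : 0 ≤ β) (m : ℕ) : II β m = ENNReal.ofReal (Ir β m) := by
  rw [Ir, ENNReal.ofReal_toReal (II_ne hβ m)]

lemma R1 {β : ℝ} (hβ : 0 ≤ β) {n : ℕ} (hn : 3 ≤ n) {s : ℝ} (hs : 0 < s) {M : ℕ}
    (hM : M * (3 * √s) ≤ 1) : M * (1 - (1 - kr β s) ^ n) ≤ ee β n := by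
  have h := card_lower hβ hn hs hM
  have hk := kr_nonneg β s
  have hk1 := kr_le_one hβ s
  have h0 : (0:ℝ) ≤ 1 - kr β s := by linarith
  have h0' : (1 - kr β s) ^ n ≤ 1 := pow_le_one₀ h0 (by linarith)
  have hI := Ir_nonneg β (n - 2)
  rw [lintegral_card hβ, one_sub_kap hβ, II_of hβ, ← ENNReal.ofReal_pow h0, ← ENNReal.ofReal_one,
    ← ENNReal.ofReal_sub _ (by positivity), ← ENNReal.ofReal_natCast M, ← ENNReal.ofReal_natCast,
    ← ENNReal.ofReal_mul (by positivity), ← ENNReal.ofReal_mul (by positivity),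
    ENNReal.ofReal_le_ofReal_iff (by positivity)] at h
  exact h

lemma R2 {β : ℝ} (hβ : 0 ≤ β) (s : ℝ) (m : ℕ) :
    (1 - kr β s) ^ 2 * Ir β m ≤ Ir β (m + 2) + (1 - kr β s) ^ m := by
  have h := II_compare hβ s m
  have hk1 := kr_le_one hβ s
  have h0 : (0:ℝ) ≤ 1 - kr β s := by linarith
  have hI := Ir_nonneg β
  rw [one_sub_kap hβ, II_of hβ, II_of hβ, ← ENNReal.ofReal_pow h0, ← ENNReal.ofReal_pow h0,
    ← ENNReal.ofReal_mul (by positivity), ← ENNReal.ofReal_add (hI _) (by positivity),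
    ENNReal.ofReal_le_ofReal_iff (add_nonneg (hI _) (by positivity))] at h
  exact h

lemma R0 {β : ℝ} (hβ : 0 ≤ β) (n : ℕ) : ∫ ω, ((edges ω).card : ℝ) ∂(betaPi β n) = ee β n := by
  have h := integral_toReal (measurable_card n).aemeasurable (μ := betaPi β n)
    (Filter.Eventually.of_forall fun ω => by simp)
  rw [lintegral_card hβ, ENNReal.toReal_mul, ENNReal.toReal_natCast] at h
  simp only [ENNReal.toReal_natCast] at h
  exact h

lemma R3 {β : ℝ} (hβ : 0 ≤ β) (n : ℕ) (s : ℝ) :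
    ∫ ω, ((edges ω).card : ℝ) ^ 2 ∂(betaPi β n) ≤ 3 * ee β n + ((n * (n - 1) : ℕ) : ℝ) ^ 2 *
      (Ir β (n - 4) ^ 2 + kr β (10 * s) ^ 2 * Ir β (n - 4) + (1 - kr β s) ^ (n - 4)) := by
  have h := integral_toReal ((measurable_card n).pow_const 2).aemeasurable (μ := betaPi β n)
    (Filter.Eventually.of_forall fun ω => by simp)
  have h2 := lintegral_card_sq hβ n s
  have hk1 := kr_le_one hβ s
  have h0 : (0:ℝ) ≤ 1 - kr β s := by linarith
  have hI := Ir_nonneg β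
  have hk := kr_nonneg β
  have hI2 := hI (n - 2)
  have hI4 := hI (n - 4)
  have hk10 := hk (10 * s)
  have h3 : (3 : ENNReal) = ENNReal.ofReal 3 := by simp
  rw [one_sub_kap hβ, II_of hβ, II_of hβ, kap_of hβ, h3, ← ENNReal.ofReal_pow h0, ← ENNReal.ofReal_pow hI4,
    ← ENNReal.ofReal_pow hk10, ← ENNReal.ofReal_mul (by positivity),
    ← ENNReal.ofReal_add (by positivity) (by positivity),
    ← ENNReal.ofReal_add (by positivity) (by positivity), ← ENNReal.ofReal_natCast,
    ← ENNReal.ofReal_pow (by positivity),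
    ← ENNReal.ofReal_mul (by positivity), ← ENNReal.ofReal_mul (by positivity),
    ← ENNReal.ofReal_mul (by positivity), ← ENNReal.ofReal_add (by positivity) (by positivity)] at h2
  have h4 := ENNReal.toReal_le_of_le_ofReal (by positivity) h2
  rw [← h] at h4
  simpa [ee] using h4

lemma card_bdd {n : ℕ} (ω : Fin n → E2) : ((edges ω).card : ℝ) ≤ Fintype.card (Fin 2 ↪ Fin n) := by
  exact_mod_cast Finset.card_le_univ _

lemma measurable_cardR (n : ℕ) : Measurable (fun ω : Fin n → E2 => ((edges ω).card : ℝ)) := by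
  have := (measurable_card n).ennreal_toReal
  simpa using this

lemma cheb {β : ℝ} (hβ : 0 ≤ β) (n : ℕ) (he : 0 < ee β n) {a : ℝ} (ha : 0 < a) :
    (betaPi β n).real {ω | a ≤ |((edges ω).card : ℝ) / ee β n - 1|} ≤
      ((∫ ω, ((edges ω).card : ℝ) ^ 2 ∂(betaPi β n)) / ee β n ^ 2 - 1) / a ^ 2 := by
  have := isProbPi hβ n
  have hi : ∀ k : ℕ, Integrable (fun ω : Fin n → E2 => ((edges ω).card : ℝ) ^ k) (betaPi β n) := by
    intro k
    refine Integrable.of_bound ((measurable_cardR n).pow_const k).aestronglyMeasurable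
      ((Fintype.card (Fin 2 ↪ Fin n) : ℝ) ^ k) (Filter.Eventually.of_forall fun ω => ?_)
    rw [Real.norm_of_nonneg (by positivity)]
    exact pow_le_pow_left₀ (by positivity) (card_bdd ω) k
  have hi1 := hi 1
  simp only [pow_one] at hi1
  have hf : ∀ ω : Fin n → E2, (((edges ω).card : ℝ) / ee β n - 1) ^ 2 =
      (((edges ω).card : ℝ) ^ 2 * (1 / ee β n ^ 2) - ((edges ω).card : ℝ) * (2 / ee β n)) + 1 := by
    intro ω; field_simp; ring
  have hI1 : Integrable (fun ω : Fin n → E2 => ((edges ω).card : ℝ) ^ 2 * (1 / ee β n ^ 2) - ((edges ω).card : ℝ) * (2 / ee β n)) (betaPi β n) :=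
    ((hi 2).mul_const _).sub (hi1.mul_const _)
  have hint : Integrable (fun ω : Fin n → E2 => (((edges ω).card : ℝ) / ee β n - 1) ^ 2) (betaPi β n) := by
    simp_rw [hf]
    exact hI1.add (integrable_const _)
  have h := mul_meas_ge_le_integral_of_nonneg (μ := betaPi β n)
    (f := fun ω : Fin n → E2 => (((edges ω).card : ℝ) / ee β n - 1) ^ 2)
    (Filter.Eventually.of_forall fun ω => sq_nonneg _) hint (a ^ 2)
  have hval : ∫ ω, (((edges ω).card : ℝ) / ee β n - 1) ^ 2 ∂(betaPi β n) =
      (∫ ω, ((edges ω).card : ℝ) ^ 2 ∂(betaPi β n)) / ee β n ^ 2 - 1 := by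
    simp_rw [hf]
    rw [integral_add hI1 (integrable_const _), integral_sub ((hi 2).mul_const _) (hi1.mul_const _),
      integral_mul_const, integral_mul_const, R0 hβ]
    simp
    field_simp
    ring
  rw [hval] at h
  rw [le_div_iff₀ (by positivity), mul_comm]
  refine le_trans (le_of_eq ?_) h
  congr 2
  ext ω
  simp only [Set.mem_ofPred_eq]
  rw [sq_le_sq, abs_of_pos ha]

lemma bridge {β : ℝ} (hβ : 0 ≤ β) {n : ℕ} (hn : 3 ≤ n) (a : ℝ) : 
    betaPi β n {ω | a ≤ |vertCount ω / meanF0 β n - 1|} =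
      betaPi β n {ω | a ≤ |((edges ω).card : ℝ) / ee β n - 1|} := by
  have hae : ∀ᵐ ω ∂(betaPi β n), vertCount ω = ((edges ω).card : ℝ) := by
    filter_upwards [ae_GP hβ n] with ω h using vertCount_eq hn h
  have hm : meanF0 β n = ee β n := by
    rw [meanF0, integral_congr_ae hae, R0 hβ]
  rw [hm]
  apply measure_congr
  filter_upwards [hae] with ω h
  change (a ≤ _) = (a ≤ _)
  rw [h]

end VCC


namespace VCC
open Filter Topology

lemma kr_up {β : ℝ} (hβ : 0 ≤ β) : ∃ C : ℝ, 0 < C ∧ ∀ s : ℝ, 0 < s → s ≤ 1 →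
    kr β s ≤ C * s ^ (β + 3 / 2) := by
  obtain ⟨C, hC, h⟩ := kap_upper hβ
  exact ⟨C, hC, fun s hs hs1 => ENNReal.toReal_le_of_le_ofReal (by positivity) (h s hs hs1)⟩

lemma kr_lo {β : ℝ} (hβ : 0 ≤ β) : ∃ c : ℝ, 0 < c ∧ ∀ s : ℝ, 0 < s → s ≤ 1 →
    c * s ^ (β + 3 / 2) ≤ kr β s := by
  obtain ⟨C, hC, h⟩ := kap_lower hβ
  exact ⟨C, hC, fun s hs hs1 => (ENNReal.ofReal_le_iff_le_toReal (kap_ne hβ s)).1 (h s hs hs1)⟩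

lemma pow_le_exp {β : ℝ} (hβ : 0 ≤ β) {s x : ℝ} (h : x ≤ kr β s) (n : ℕ) :
    (1 - kr β s) ^ n ≤ Real.exp (-(x * n)) := by
  have h1 := kr_le_one hβ s
  calc (1 - kr β s) ^ n ≤ (Real.exp (-x)) ^ n := by
        apply pow_le_pow_left₀ (by linarith)
        linarith [Real.add_one_le_exp (-x)]
    _ = _ := by rw [← Real.exp_nat_mul]; ring_nf

lemma tend_rpow {p : ℝ} (hp : 0 < p) : Tendsto (fun n : ℕ => (n : ℝ) ^ p) atTop atTop :=
  (tendsto_rpow_atTop hp).comp tendsto_natCast_atTop_atTop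

lemma tend_rpow_neg {p : ℝ} (hp : 0 < p) : Tendsto (fun n : ℕ => (n : ℝ) ^ (-p)) atTop (𝓝 0) :=
  (tendsto_rpow_neg_atTop hp).comp tendsto_natCast_atTop_atTop

lemma ee_lower {β : ℝ} (hβ : 0 ≤ β) : ∃ c : ℝ, 0 < c ∧ ∀ᶠ n : ℕ in atTop,
    c * (n : ℝ) ^ (1 / (2 * (β + 3 / 2))) ≤ ee β n := by
  obtain ⟨c, hc, h⟩ := kr_lo hβ
  set α := β + 3 / 2 with hα
  have hα0 : 0 < α := by linarith
  have hlt : Real.exp (-c) < 1 := by rw [Real.exp_lt_one_iff]; linarith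
  refine ⟨(1 - Real.exp (-c)) / 6, by linarith, ?_⟩
  filter_upwards [eventually_ge_atTop 3, (tend_rpow (p := 1 / (2 * α)) (by positivity)).eventually_ge_atTop 6]
    with n hn h6
  have hn0 : (0:ℝ) < n := by positivity
  have hn1 : (1:ℝ) ≤ n := by exact_mod_cast (by omega : 1 ≤ n)
  set y := (n : ℝ) ^ (1 / (2 * α)) with hy
  set s := (n : ℝ) ^ (-(1 / α)) with hs
  have hs0 : 0 < s := by positivity
  have hs1 : s ≤ 1 := Real.rpow_le_one_of_one_le_of_nonpos hn1 (by simp; positivity)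
  have hsα : s ^ α = 1 / n := by
    rw [hs, ← Real.rpow_mul hn0.le, show -(1 / α) * α = -1 by field_simp, Real.rpow_neg_one, one_div]
  have hsq : √s * y = 1 := by
    rw [Real.sqrt_eq_rpow, hs, hy, ← Real.rpow_mul hn0.le, ← Real.rpow_add hn0,
      show -(1 / α) * (1 / 2) + 1 / (2 * α) = 0 by field_simp; ring, Real.rpow_zero]
  have hM : (⌊y / 3⌋₊ : ℝ) * (3 * √s) ≤ 1 := by
    have := Nat.floor_le (show 0 ≤ y / 3 by positivity)
    have h0 := Real.sqrt_nonneg s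
    nlinarith
  have h1 := R1 hβ hn hs0 hM
  have h2 := h s hs0 hs1
  rw [hsα] at h2
  have h3 := pow_le_exp hβ h2 n
  rw [show -(c * (1 / n) * n) = -c by field_simp] at h3
  have h4 := Nat.lt_floor_add_one (y / 3)
  refine le_trans ?_ h1
  have h5 : y / 6 ≤ (⌊y / 3⌋₊ : ℝ) := by linarith
  calc (1 - Real.exp (-c)) / 6 * y = y / 6 * (1 - Real.exp (-c)) := by ring
    _ ≤ (⌊y / 3⌋₊ : ℝ) * (1 - (1 - kr β s) ^ n) := by
      apply mul_le_mul h5 (by linarith) (by linarith) (by positivity)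

lemma choose_s {β : ℝ} (hβ : 0 ≤ β) : ∃ s : ℕ → ℝ,
    Tendsto (fun n => kr β (s n)) atTop (𝓝 0) ∧
    Tendsto (fun n : ℕ => (n : ℝ) ^ 4 * (1 - kr β (s n)) ^ (n - 4)) atTop (𝓝 0) ∧
    ∃ C : ℝ, ∀ᶠ n : ℕ in atTop, (n : ℝ) ^ 2 * kr β (10 * s n) ^ 2 ≤ C * (n : ℝ) ^ (1 / (4 * (β + 3 / 2))) := by
  obtain ⟨c, hc, hlo⟩ := kr_lo hβ
  obtain ⟨C, hC, hup⟩ := kr_up hβ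
  set α := β + 3 / 2 with hα
  have hα0 : 3 / 2 ≤ α := by linarith
  set η := 1 / (8 * α) with hη
  have hη0 : 0 < η := by positivity
  have hη1 : η < 1 := by rw [hη, div_lt_one (by positivity)]; linarith
  have hp : 0 < (1 - η) / α := div_pos (by linarith) (by linarith)
  refine ⟨fun n => (n : ℝ) ^ (-((1 - η) / α)), ?_, ?_, C ^ 2 * (10 ^ α) ^ 2, ?_⟩
  all_goals
    have hs1 : ∀ᶠ n : ℕ in atTop, (n : ℝ) ^ (-((1 - η) / α)) < 1 / 10 :=
      (tend_rpow_neg hp).eventually_lt_const (by norm_num)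
    have hsα : ∀ n : ℕ, 0 < n → ((n : ℝ) ^ (-((1 - η) / α))) ^ α = (n : ℝ) ^ (-(1 - η)) := by
      intro n hn
      rw [← Real.rpow_mul (by positivity)]; congr 1; field_simp
  · have h0 : Tendsto (fun n : ℕ => C * (n : ℝ) ^ (-(1 - η))) atTop (𝓝 0) := by
      simpa using (tend_rpow_neg (p := 1 - η) (by linarith)).const_mul C
    refine squeeze_zero' (Eventually.of_forall fun n => kr_nonneg _ _) ?_ h0
    filter_upwards [hs1, eventually_gt_atTop 0] with n h1 h2
    rw [← hsα n h2]
    exact hup _ (by positivity) (by linarith)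
  · have h0 := (tendsto_rpow_mul_exp_neg_mul_atTop_nhds_zero (4 / η) (c / 2) (by positivity)).comp (tend_rpow hη0)
    refine squeeze_zero' (Eventually.of_forall fun n => ?_) ?_ h0
    · have := kr_le_one hβ ((n : ℝ) ^ (-((1 - η) / α)))
      exact mul_nonneg (by positivity) (pow_nonneg (by linarith) _)
    filter_upwards [hs1, eventually_ge_atTop 8] with n h1 h2
    have hn0 : (0:ℝ) < n := by positivity
    have h3 := hlo _ (by positivity) (by linarith : (n : ℝ) ^ (-((1 - η) / α)) ≤ 1)
    rw [hsα n (by omega)] at h3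
    have h4 := pow_le_exp hβ h3 (n - 4)
    have h5 : ((n : ℝ) ^ η) ^ (4 / η) = (n : ℝ) ^ 4 := by
      rw [← Real.rpow_mul hn0.le, show η * (4 / η) = (4 : ℕ) by field_simp; norm_num, Real.rpow_natCast]
    simp only [Function.comp_apply, h5]
    refine mul_le_mul_of_nonneg_left (h4.trans ?_) (by positivity)
    rw [Real.exp_le_exp]
    have h6 : (n : ℝ) / 2 ≤ ((n - 4 : ℕ) : ℝ) := by
      rw [Nat.cast_sub (by omega)]
      have : (8 : ℝ) ≤ n := by exact_mod_cast h2
      push_cast; linarith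
    have h7 : (n : ℝ) ^ η = (n : ℝ) ^ (-(1 - η)) * n := by
      rw [← Real.rpow_add_one hn0.ne']; congr 1; ring
    rw [h7]
    have h8 : 0 < c * (n : ℝ) ^ (-(1 - η)) := by positivity
    nlinarith
  · filter_upwards [hs1, eventually_gt_atTop 0] with n h1 h2
    have hn0 : (0:ℝ) < n := by positivity
    have h3 := hup (10 * (n : ℝ) ^ (-((1 - η) / α))) (by positivity) (by linarith)
    rw [Real.mul_rpow (by norm_num) (by positivity), hsα n h2] at h3
    have h4 := kr_nonneg β (10 * (n : ℝ) ^ (-((1 - η) / α)))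
    calc (n : ℝ) ^ 2 * kr β (10 * (n : ℝ) ^ (-((1 - η) / α))) ^ 2
        ≤ (n : ℝ) ^ 2 * (C * (10 ^ α * (n : ℝ) ^ (-(1 - η)))) ^ 2 := by gcongr
      _ = C ^ 2 * (10 ^ α) ^ 2 * ((n : ℝ) ^ (-(1 - η)) * n) ^ 2 := by ring
      _ = _ := by
        rw [← Real.rpow_add_one hn0.ne', ← Real.rpow_mul_natCast hn0.le]
        congr 2
        rw [hη]; push_cast; field_simp; ring

lemma main {β : ℝ} (hβ : 0 ≤ β) {a : ℝ} (ha : 0 < a) :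
    Tendsto (fun n : ℕ => betaPi β n {ω | a ≤ |vertCount ω / meanF0 β n - 1|}) atTop (𝓝 0) := by
  obtain ⟨c, hc, hlow⟩ := ee_lower hβ
  obtain ⟨s, hs1, hs2, C, hs3⟩ := choose_s hβ
  set α := β + 3 / 2 with hα
  have hα0 : 3 / 2 ≤ α := by linarith
  set r : ℕ → ℝ := fun n => 1 - kr β (s n) with hr
  set δ : ℕ → ℝ := fun n => (n : ℝ) ^ 4 * r n ^ (n - 4) with hδ
  have hr1 : Tendsto r atTop (𝓝 1) := by simpa using hs1.const_sub 1
  have heinf : Tendsto (ee β) atTop atTop := by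
    refine tendsto_atTop_mono' _ hlow ?_
    exact (tend_rpow (by positivity)).const_mul_atTop hc
  have heinv : Tendsto (fun n => (ee β n)⁻¹) atTop (𝓝 0) := heinf.inv_tendsto_atTop
  set Y : ℕ → ℝ := fun n => (1 + δ n * (ee β n)⁻¹) / r n ^ 2 with hY
  have hY1 : Tendsto Y atTop (𝓝 1) := by
    have h1 := ((hs2.mul heinv).const_add 1).div (hr1.pow 2) (by norm_num)
    simp only [mul_zero, add_zero, one_pow, div_one] at h1
    exact h1
  set W : ℕ → ℝ := fun n => (n : ℝ) ^ 2 * kr β (10 * s n) ^ 2 * (ee β n)⁻¹ with hW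
  have hepos := heinf.eventually_gt_atTop 0
  have hW0 : Tendsto W atTop (𝓝 0) := by
    have h0 : Tendsto (fun n : ℕ => C / c * (n : ℝ) ^ (-(1 / (4 * α)))) atTop (𝓝 0) := by
      simpa using (tend_rpow_neg (p := 1 / (4 * α)) (by positivity)).const_mul (C / c)
    refine squeeze_zero' ?_ ?_ h0
    · filter_upwards [hepos] with n hn
      positivity
    filter_upwards [hepos, hlow, hs3, eventually_gt_atTop 0] with n hn h1 h2 h3
    have hn0 : (0:ℝ) < n := by positivity
    have h5 : (0:ℝ) ≤ C * (n : ℝ) ^ (1 / (4 * α)) := le_trans (by positivity) h2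
    have h4 : W n ≤ (C * (n : ℝ) ^ (1 / (4 * α))) * (c * (n : ℝ) ^ (1 / (2 * α)))⁻¹ := by
      apply mul_le_mul h2 _ (by positivity) h5
      exact inv_anti₀ (by positivity) h1
    refine h4.trans (le_of_eq ?_)
    have h6 : (n : ℝ) ^ (1 / (2 * α)) = (n : ℝ) ^ (1 / (4 * α)) * (n : ℝ) ^ (1 / (4 * α)) := by
      rw [← Real.rpow_add hn0]; congr 1; field_simp; norm_num
    rw [h6, Real.rpow_neg hn0.le]
    field_simp
  set U : ℕ → ℝ := fun n => 3 * (ee β n)⁻¹ + Y n ^ 2 + W n * Y n + δ n * (ee β n)⁻¹ ^ 2 with hU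
  have hU1 : Tendsto U atTop (𝓝 1) := by
    have := (((heinv.const_mul 3).add (hY1.pow 2)).add (hW0.mul hY1)).add (hs2.mul (heinv.pow 2))
    have h0 : (3 * 0 + 1 ^ 2 + 0 * 1 + 0 * 0 ^ 2 : ℝ) = 1 := by norm_num
    rw [h0] at this
    exact this
  have hfin : Tendsto (fun n => ENNReal.ofReal ((U n - 1) / a ^ 2)) atTop (𝓝 0) := by
    have h1 := (hU1.sub_const 1).div_const (a ^ 2)
    have := ENNReal.tendsto_ofReal h1
    simpa using this
  refine tendsto_of_tendsto_of_tendsto_of_le_of_le' tendsto_const_nhds hfin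
    (Eventually.of_forall fun n => bot_le) ?_
  filter_upwards [hepos, eventually_ge_atTop 4, hr1.eventually (lt_mem_nhds (show (0:ℝ) < 1 by norm_num))] with n he hn hrn
  have hP := isProbPi hβ n
  rw [bridge hβ (by omega) a, ← ofReal_measureReal]
  apply ENNReal.ofReal_le_ofReal
  refine (cheb hβ n he ha).trans ?_
  gcongr
  rw [div_le_iff₀ (by positivity)]
  refine (R3 hβ n (s n)).trans ?_
  have h2 := R2 hβ (s n) (n - 4)
  rw [show n - 4 + 2 = n - 2 by omega] at h2
  set P : ℝ := ((n * (n - 1) : ℕ) : ℝ) with hPdef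
  set I4 := Ir β (n - 4) with hI4
  have hI4n : 0 ≤ I4 := Ir_nonneg _ _
  have hP0 : 0 ≤ P := by positivity
  have hP1 : 1 ≤ P := by
    rw [hPdef]; exact_mod_cast Nat.mul_pos (by omega) (by omega : 0 < n - 1)
  have hP2 : P ≤ (n : ℝ) ^ 2 := by
    rw [hPdef, sq]; exact_mod_cast Nat.mul_le_mul_left n (by omega)
  set ρ := r n ^ (n - 4) with hρ
  have hρ0 : 0 ≤ ρ := by positivity
  have hδ2 : P ^ 2 * ρ ≤ δ n := by
    have : P ^ 2 ≤ (n : ℝ) ^ 4 := by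
      calc P ^ 2 ≤ ((n : ℝ) ^ 2) ^ 2 := by gcongr
        _ = _ := by ring
    exact mul_le_mul_of_nonneg_right this hρ0
  have hδ1 : P * ρ ≤ δ n := by
    refine le_trans ?_ hδ2
    apply mul_le_mul_of_nonneg_right _ hρ0
    nlinarith
  have hX : P * I4 ≤ Y n * ee β n := by
    have h3 : r n ^ 2 * (P * I4) ≤ ee β n + δ n := by
      calc r n ^ 2 * (P * I4) = P * (r n ^ 2 * I4) := by ring
        _ ≤ P * (Ir β (n - 2) + ρ) := by gcongr
        _ = ee β n + P * ρ := by rw [mul_add]; rfl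
        _ ≤ _ := by linarith
    have h4 : Y n * ee β n = (ee β n + δ n) / r n ^ 2 := by
      simp only [hY]; field_simp
    rw [h4, le_div_iff₀ (by positivity)]
    linarith
  have hX0 : 0 ≤ P * I4 := by positivity
  have hK := kr_nonneg β (10 * s n)
  set K := kr β (10 * s n) with hKdef
  have hUe : U n * ee β n ^ 2 = 3 * ee β n + (Y n * ee β n) ^ 2 + (n : ℝ) ^ 2 * K ^ 2 * (Y n * ee β n) + δ n := by
    simp only [hU, hW]; rw [← hKdef]; field_simp
  rw [hUe]
  have e1 : (P * I4) ^ 2 ≤ (Y n * ee β n) ^ 2 := by gcongr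
  have e2 : P * K ^ 2 * (P * I4) ≤ (n : ℝ) ^ 2 * K ^ 2 * (Y n * ee β n) := by gcongr
  calc _ = 3 * ee β n + (P * I4) ^ 2 + P * K ^ 2 * (P * I4) + P ^ 2 * ρ := by
        change 3 * ee β n + P ^ 2 * (I4 ^ 2 + K ^ 2 * I4 + ρ) = _
        ring
    _ ≤ _ := by linarith

end VCC


/-- concentration of the vertex count. For `d ≥ 5`, `β = d/2 - 2` and any
`a > 0`, the probability `μ_β^{⊗n}(|f₀(Qₙ)/E[f₀(Qₙ)] - 1| ≥ a)` tends to `0`, i.e.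
`f₀(Qₙ)/E[f₀(Qₙ)]` converges in probability to `1`. -/
theorem vertex_count_concentration (d : ℕ) (hd : 5 ≤ d)
    (β : ℝ) (hβ : β = (d : ℝ) / 2 - 2) (a : ℝ) (ha : 0 < a) :
    Filter.Tendsto
      (fun n : ℕ => betaPi β n {ω | a ≤ |vertCount ω / meanF0 β n - 1|})
      Filter.atTop (nhds 0) := by
  refine VCC.main ?_ ha
  have : (5 : ℝ) ≤ d := by exact_mod_cast hd
  linarith
end
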